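/- Let S be a standard graded ring over a Noetherian local ring (S_0, m_0) and let M, N be finitely generated graded S-modules such that M or N has finite projective dimension and such that Tor_i^S(M,N) ⊗_{S_0} S_0/m_0 is supported in dimension at most one for all i ≥ 1. Then max_i { reg(Tor_i^S(M,N)) − i } = reg(M) + reg(N) − reg(S). -/

import Mathlib

/-! The proof compares local cohomology with Koszul cohomology.
Graded local cohomology is the colimit over `t` of the Koszul cohomology of `x_1^t, …, x_n^t`. The
regularity of a finitely generated graded module `P` is compared with its Koszul regularity, the
largest total degree `i + j` in which the Koszul cohomology of the `x_s` themselves does not vanish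
(`IsReg`). Long exact sequences raising one exponent at a time show that local cohomology vanishes
above this degree (`V_of_KV`), and that a Koszul class in this total degree and in the smallest
possible cohomological degree survives in the colimit (`survive`). Hence the two invariants agree
(`IsReg.regVal_eq`).

Let `T` be the largest value of `deg - i` over the basis elements of the terms `F_i` of the minimal
resolution. The theorem follows from the equality `max_i (reg Tor_i(M, N) - i) = T + reg N`: for
`N = S`, where the homology of `F` is `M` in degree zero, it says `reg M = T + reg S` (`reg_eq`).

*Upper bound* (`V_H`). The local cohomology of `F_q ⊗ N` vanishes above total degree
`T + reg N + q`. The sequences `0 → Z_{q+1} → F_{q+1} ⊗ N → B_q → 0` and `0 → B_q → Z_q → H_q → 0`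
carry this to the boundaries in cohomological degrees `≥ 1`, by descending induction on `q`, and to
the cycles in cohomological degrees `≤ 1`, by ascending induction, hence to the homology. This uses
that `H^p(Tor_q) = 0` for `p ≥ 2` and `q ≥ 1`, which is where the hypothesis on the dimension enters
(`V_of_dim_le_one`): homogeneous prime avoidance gives a form `y` generating `S₊` up to radical
modulo `Ann + 𝔪₀ S`, and Nakayama's lemma over `S₀` in each degree removes `𝔪₀ S`, so that the local
cohomology of `Tor_q` is that of a single element.

*Lower bound* (`lower`). It needs neither exactness nor the dimension hypothesis. Let `j` be the last
homological degree in which `T` is attained, at a basis element `b`, and take Koszul classes of `N`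
of total degree `reg N` in the largest possible cohomological degree, placed at `b`. If the Koszul
cohomology of all the homology modules vanished in the critical range, these classes would be images
of Koszul classes of `F_{j+1} ⊗ N`. Since the twists of `F_{j+1}` do not exceed that of `b`, each
entry of the matrix either multiplies a class which is zero for degree reasons, or lies in `𝔪₀` by
minimality. Nakayama's lemma then gives that all these classes vanish, a contradiction.
-/

open Finset

section PaperRegularity

/-! ## Graded rings, graded modules, and a concrete (Koszul/Čech) model of graded local
cohomology, used to express the invariants `a_i(M)` and `reg(M)` of Castelnuovo–Mumford
regularity theory. -/

/-- Degrees, with `−∞` (for vanishing modules) and `+∞`. -/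
abbrev Deg : Type := WithBot (WithTop ℤ)

/-- The canonical inclusion of `ℤ` into `Deg`. -/
def Deg.of (j : ℤ) : Deg := ((j : WithTop ℤ) : Deg)

variable {S : Type} [CommRing S]

/-- `𝒜` is a (ℤ-indexed, nonnegatively supported) standard grading on the ring `S`:
`S = ⊕ 𝒜_i`, `1 ∈ 𝒜_0`, `𝒜_i · 𝒜_j ⊆ 𝒜_{i+j}`, `𝒜_i = 0` for `i < 0`, and `S` is
generated in degree one: `𝒜_{i+1} = 𝒜_1 · 𝒜_i`. -/
structure IsStdGraded (𝒜 : ℤ → AddSubgroup S) : Prop where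
  internal : DirectSum.IsInternal 𝒜
  one_mem : (1 : S) ∈ 𝒜 0
  mul_mem : ∀ {i j : ℤ} {a b : S}, a ∈ 𝒜 i → b ∈ 𝒜 j → a * b ∈ 𝒜 (i + j)
  bot_of_neg : ∀ i < (0 : ℤ), 𝒜 i = ⊥
  gen_one : ∀ i : ℤ, 0 ≤ i → ∀ a ∈ 𝒜 (i + 1),
    a ∈ AddSubgroup.closure {y : S | ∃ s ∈ 𝒜 1, ∃ b ∈ 𝒜 i, y = s * b}

/-- `S` is a standard graded ring *over* `R₀` (via the algebra structure):
the degree-zero part is exactly the image of `R₀`. -/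
def GradedOver (𝒜 : ℤ → AddSubgroup S) (R₀ : Type) [CommRing R₀] [Algebra R₀ S] : Prop :=
  Function.Injective (algebraMap R₀ S) ∧ (𝒜 0 : Set S) = Set.range (algebraMap R₀ S)

/-- `ℳ` is a grading on the `S`-module `M`, compatible with the grading `𝒜` of `S`. -/
structure IsGradedMod (𝒜 : ℤ → AddSubgroup S) {M : Type} [AddCommGroup M] [Module S M]
    (ℳ : ℤ → AddSubgroup M) : Prop where
  internal : DirectSum.IsInternal ℳ
  smul_mem : ∀ {i j : ℤ} {s : S} {m : M}, s ∈ 𝒜 i → m ∈ ℳ j → s • m ∈ ℳ (i + j)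

/-- `x : Fin n → S` is a family of degree-one elements generating `𝒜 1` (hence generating
the irrelevant ideal `S₊` up to radical). -/
def GensDegOne (𝒜 : ℤ → AddSubgroup S) {n : ℕ} (x : Fin n → S) : Prop :=
  (∀ i, x i ∈ 𝒜 1) ∧
    ∀ s ∈ 𝒜 1, s ∈ AddSubgroup.closure {y : S | ∃ r ∈ 𝒜 0, ∃ i, y = r * x i}

/-- The irrelevant ideal `S₊ = ⊕_{i>0} 𝒜_i` of a graded ring. -/
def sPlus (𝒜 : ℤ → AddSubgroup S) : Ideal S :=
  Ideal.span {s : S | ∃ i : ℤ, 0 < i ∧ s ∈ 𝒜 i}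

/-- The induced grading on a quotient module `M ⧸ P` (images of the graded pieces). -/
def qmPiece {M : Type} [AddCommGroup M] [Module S M] (P : Submodule S M)
    (ℳ : ℤ → AddSubgroup M) (j : ℤ) : AddSubgroup (M ⧸ P) :=
  AddSubgroup.map (P.mkQ).toAddMonoidHom (ℳ j)

section Koszul

variable {M : Type} [AddCommGroup M] [Module S M] {n : ℕ}

/-- Cochains of the (exponent `t`) Koszul cocomplex on `x_1^t, …, x_n^t` with values in `M`. -/
abbrev KCochain (M : Type) (n i : ℕ) : Type := {T : Finset (Fin n) // T.card = i} → M

/-- The Koszul codifferential (for the sequence `x_1^t, …, x_n^t`). -/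
noncomputable def kd (x : Fin n → S) (t i : ℕ) (z : KCochain M n i) : KCochain M n (i + 1) :=
  fun T => ∑ s ∈ T.1.attach,
    ((-1 : ℤ) ^ ((T.1.filter (fun a => a < s.1)).card)) •
      ((x s.1 ^ t) • z ⟨T.1.erase s.1, by
        rw [Finset.card_erase_of_mem s.2, T.2]; rfl⟩)

/-- The transition map from the exponent `t` Koszul cocomplex to the exponent `t + u` one. -/
noncomputable def kpush (x : Fin n → S) (u i : ℕ) (z : KCochain M n i) : KCochain M n i :=
  fun T => (∏ s ∈ T.1, x s ^ u) • z T

/-- `z` is a coboundary in the exponent `t` Koszul cocomplex. -/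
def kIsCobound (x : Fin n → S) (t : ℕ) : ∀ i, KCochain M n i → Prop
  | 0, z => z = 0
  | i + 1, z => ∃ w : KCochain M n i, kd x t i w = z

/-- `z` lies in the internal degree `j` strand of the exponent `t` Koszul cocomplex
(in cohomological degree `i`), for the grading `ℳ` of `M`. -/
def kStrand (ℳ : ℤ → AddSubgroup M) (t i : ℕ) (j : ℤ) (z : KCochain M n i) : Prop :=
  ∀ T, z T ∈ ℳ (j + (t * i : ℕ))

/-- Nonvanishing of the degree `j` part of the `i`-th graded local cohomology module
`H^i_{S₊}(M)_j`, computed as the direct limit over `t` of the Koszul cohomologies of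
`x_1^t, …, x_n^t`: there is a degree `j` cocycle whose class survives in the colimit. -/
def lcNZ (x : Fin n → S) (ℳ : ℤ → AddSubgroup M) (i : ℕ) (j : ℤ) : Prop :=
  ∃ (t : ℕ) (z : KCochain M n i), kStrand ℳ t i j z ∧ kd x t i z = 0 ∧
    ∀ u : ℕ, ¬ kIsCobound x (t + u) i (kpush x u i z)

/-- `a_i(M)`: the top degree of the `i`-th local cohomology of `M` (`⊥` if it vanishes). -/
noncomputable def aVal (x : Fin n → S) (ℳ : ℤ → AddSubgroup M) (i : ℕ) : Deg :=
  sSup {d : Deg | ∃ j : ℤ, lcNZ x ℳ i j ∧ d = Deg.of j}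

/-- The Castelnuovo–Mumford regularity `reg M = max_i (a_i(M) + i)`. -/
noncomputable def regVal (x : Fin n → S) (ℳ : ℤ → AddSubgroup M) : Deg :=
  sSup {d : Deg | ∃ (i : ℕ) (j : ℤ), lcNZ x ℳ i j ∧ d = Deg.of (j + i)}

end Koszul

/-- A (bounded-below, homologically indexed) complex of finitely generated graded free
`S`-modules `F_i = ⊕_{a : Fin (r i)} S(-deg i a)`, recorded via its matrices: the entry
`mat i a b ∈ S` is the coefficient of the `b`-th basis vector of `F_i` in the image of the
`a`-th basis vector of `F_{i+1}`; entries are homogeneous of the appropriate degrees. -/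
structure GFC (𝒜 : ℤ → AddSubgroup S) where
  r : ℕ → ℕ
  deg : ∀ i, Fin (r i) → ℤ
  mat : ∀ i, Fin (r (i + 1)) → Fin (r i) → S
  mat_mem : ∀ i a b, mat i a b ∈ 𝒜 (deg (i + 1) a - deg i b)
  comp_eq_zero : ∀ i (a : Fin (r (i + 2))) (c : Fin (r i)),
    ∑ b, mat i b c * mat (i + 1) a b = 0

/-- A minimal graded free resolution of the graded `S`-module `M` (with grading `ℳ`):
a graded free complex `F_•` together with an augmentation `F_0 → M` which is surjective,
exact, and minimal (all entries of the differentials lie in the maximal graded ideal;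
`m0` is the set of degree-zero elements lying in the maximal ideal of `S_0`). -/
structure MGFR (𝒜 : ℤ → AddSubgroup S) {M : Type} [AddCommGroup M] [Module S M]
    (ℳ : ℤ → AddSubgroup M) (m0 : Set S) extends GFC 𝒜 where
  augm : Fin (r 0) → M
  augm_mem : ∀ a, augm a ∈ ℳ (deg 0 a)
  augm_surj : ∀ m : M, ∃ z : Fin (r 0) → S, ∑ a, z a • augm a = m
  exact_zero : ∀ z : Fin (r 0) → S, (∑ a, z a • augm a = 0) ↔
    ∃ w : Fin (r 1) → S, (fun b => ∑ a, mat 0 a b * w a) = z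
  exact_succ : ∀ i (z : Fin (r (i + 1)) → S),
    ((fun b => ∑ a, mat i a b * z a) = (0 : Fin (r i) → S)) ↔
      ∃ w : Fin (r (i + 2)) → S, (fun c => ∑ a, mat (i + 1) a c * w a) = z
  minimal : ∀ i a b, deg (i + 1) a = deg i b → mat i a b ∈ m0

namespace GFC

variable {𝒜 : ℤ → AddSubgroup S} (F : GFC 𝒜)
variable (N : Type) [AddCommGroup N] [Module S N]

/-- The complex `F_• ⊗_S N`, in homological degree `i`. -/
noncomputable def tmap (i : ℕ) : ((Fin (F.r (i + 1)) → N) →ₗ[S] (Fin (F.r i) → N)) where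
  toFun z := fun b => ∑ a, F.mat i a b • z a
  map_add' y z := by
    funext b
    simp only [Pi.add_apply, smul_add]
    exact Finset.sum_add_distrib
  map_smul' s z := by
    funext b
    simp only [Pi.smul_apply, RingHom.id_apply]
    rw [Finset.smul_sum]
    exact Finset.sum_congr rfl fun a _ => smul_comm (F.mat i a b) s (z a)

/-- Cycles of the complex `F_• ⊗_S N`. -/
noncomputable def cyc : ∀ i : ℕ, Submodule S (Fin (F.r i) → N)
  | 0 => ⊤
  | i + 1 => LinearMap.ker (F.tmap N i)

/-- Boundaries of the complex `F_• ⊗_S N`. -/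
noncomputable def bdry (i : ℕ) : Submodule S (Fin (F.r i) → N) :=
  LinearMap.range (F.tmap N i)

/-- The homology `H_i(F_• ⊗_S N)` (e.g. `Tor_i^S(M, N)` when `F` is a resolution of `M`). -/
noncomputable def H (i : ℕ) : Type :=
  (F.cyc N i) ⧸ (Submodule.comap (F.cyc N i).subtype (F.bdry N i))

noncomputable instance (i : ℕ) : AddCommGroup (F.H N i) :=
  inferInstanceAs (AddCommGroup ((F.cyc N i) ⧸ (Submodule.comap (F.cyc N i).subtype (F.bdry N i))))

noncomputable instance (i : ℕ) : Module S (F.H N i) :=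
  inferInstanceAs (Module S ((F.cyc N i) ⧸ (Submodule.comap (F.cyc N i).subtype (F.bdry N i))))

/-- The internal degree `j` part of `F_i ⊗_S N`, for a grading `𝒩` of `N`. -/
def fpiece (𝒩 : ℤ → AddSubgroup N) (i : ℕ) (j : ℤ) : AddSubgroup (Fin (F.r i) → N) :=
  AddSubgroup.pi Set.univ (fun a => 𝒩 (j - F.deg i a))

/-- The induced grading on the homology `H_i(F_• ⊗_S N)`. -/
noncomputable def Hpiece (𝒩 : ℤ → AddSubgroup N) (i : ℕ) (j : ℤ) : AddSubgroup (F.H N i) :=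
  AddSubgroup.map
    ((Submodule.mkQ (Submodule.comap (F.cyc N i).subtype (F.bdry N i))).toAddMonoidHom)
    (AddSubgroup.comap ((F.cyc N i).subtype).toAddMonoidHom (F.fpiece N 𝒩 i j))

/-- Nonvanishing of the degree `j` part of `H_i(F_• ⊗_S N)` (e.g. of `Tor_i^S(M, N)_j`). -/
noncomputable def HNZ (𝒩 : ℤ → AddSubgroup N) (i : ℕ) (j : ℤ) : Prop :=
  F.Hpiece N 𝒩 i j ≠ ⊥

end GFC

/-- The dimension of the support of an `S`-module. -/
noncomputable def mdim (S : Type) [CommRing S] (X : Type) [AddCommGroup X] [Module S X] :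
    WithBot (WithTop ℕ) :=
  ringKrullDim (S ⧸ Module.annihilator S X)

end PaperRegularity

namespace RegTor

/-! ### Gradings and the Koszul complex -/

section Gradings

variable {S : Type} [CommRing S] {𝒜 : ℤ → AddSubgroup S}

/-- A grading of the `S`-module `P` compatible with `𝒜`, encoded by the projections `pr j` onto
the homogeneous components; the degree `j` piece is the set of fixed points of `pr j`. -/
structure Gr (𝒜 : ℤ → AddSubgroup S) (P : Type) [AddCommGroup P] [Module S P] where
  pr : ℤ → P →+ P
  pr_pr : ∀ i j p, pr i (pr j p) = if i = j then pr j p else 0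
  fin : ∀ p, ∃ F : Finset ℤ, (∀ j, j ∉ F → pr j p = 0) ∧ ∑ j ∈ F, pr j p = p
  smul : ∀ k j (s : S) (p : P), s ∈ 𝒜 k → pr (k + j) (s • p) = s • pr j p

variable {P Q : Type} [AddCommGroup P] [Module S P] [AddCommGroup Q] [Module S Q]

namespace Gr

lemma pr_same (g : Gr 𝒜 P) (j : ℤ) (p : P) : g.pr j (g.pr j p) = g.pr j p := by
  rw [g.pr_pr, if_pos rfl]

lemma ext_pr (g : Gr 𝒜 P) {p q : P} (h : ∀ j, g.pr j p = g.pr j q) : p = q := by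
  obtain ⟨F, hF, hs⟩ := g.fin (p - q)
  rw [← sub_eq_zero, ← hs]
  exact Finset.sum_eq_zero fun j _ => by rw [map_sub, h j, sub_self]

lemma pr_of_ne (g : Gr 𝒜 P) {i j : ℤ} {p : P} (hp : g.pr j p = p) (h : i ≠ j) :
    g.pr i p = 0 := by
  rw [← hp, g.pr_pr, if_neg h]

lemma smul_fix (g : Gr 𝒜 P) {k j l : ℤ} {s : S} {p : P} (hs : s ∈ 𝒜 k) (hp : g.pr j p = p)
    (hl : l = k + j) : g.pr l (s • p) = s • p := by
  rw [hl, g.smul k j s p hs, hp]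

lemma zsmul_fix (g : Gr 𝒜 P) {j : ℤ} {p : P} (c : ℤ) (hp : g.pr j p = p) :
    g.pr j (c • p) = c • p := by
  rw [map_zsmul, hp]

lemma sum_of_superset (g : Gr 𝒜 P) {p : P} {F G : Finset ℤ} (hF : ∀ j, j ∉ F → g.pr j p = 0)
    (hs : ∑ j ∈ F, g.pr j p = p) (h : F ⊆ G) : ∑ j ∈ G, g.pr j p = p := by
  rw [← Finset.sum_subset h fun j _ hj => hF j hj, hs]

/-- The grading with given pieces, from the internal direct sum decomposition. -/
noncomputable def ofGraded {ℳ : ℤ → AddSubgroup P} (h : IsGradedMod 𝒜 ℳ) : Gr 𝒜 P := by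
  classical
  let _ := h.internal.chooseDecomposition
  have key : ∀ (i j : ℤ) (p : P), p ∈ ℳ j →
      ((DirectSum.decompose ℳ p i : ℳ i) : P) = if i = j then p else 0 := by
    intro i j p hp
    split_ifs with hij
    · subst hij; exact DirectSum.decompose_of_mem_same ℳ hp
    · exact DirectSum.decompose_of_mem_ne ℳ hp (Ne.symm hij)
  exact
  { pr := fun j =>
      { toFun := fun p => (DirectSum.decompose ℳ p j : P)
        map_zero' := by simp
        map_add' := by intro a b; simp }
    pr_pr := by
      intro i j p
      exact key i j _ (DirectSum.decompose ℳ p j).2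
    fin := by
      intro p
      refine ⟨(DirectSum.decompose ℳ p).support, ?_, DirectSum.sum_support_decompose ℳ p⟩
      intro j hj
      have : DirectSum.decompose ℳ p j = 0 := by
        by_contra hne
        exact hj (DFinsupp.mem_support_iff.2 hne)
      change ((DirectSum.decompose ℳ p j : ℳ j) : P) = 0
      rw [this]; rfl
    smul := by
      intro k j s p hs
      change ((DirectSum.decompose ℳ (s • p) (k + j) : ℳ (k + j)) : P)
        = s • ((DirectSum.decompose ℳ p j : ℳ j) : P)
      conv_lhs => rw [← DirectSum.sum_support_decompose ℳ p, Finset.smul_sum,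
        DirectSum.decompose_sum, DFinsupp.finsetSum_apply]
      rw [AddSubmonoidClass.coe_finsetSum]
      rw [Finset.sum_congr rfl (g := fun l => if k + j = k + l then
        s • ((DirectSum.decompose ℳ p l : ℳ l) : P) else 0)
        (fun l _ => key _ _ _ (h.smul_mem hs (DirectSum.decompose ℳ p l).2))]
      simp only [add_right_inj]
      rw [Finset.sum_ite_eq]
      split_ifs with hj
      · rfl
      · have : DirectSum.decompose ℳ p j = 0 := by
          by_contra hne
          exact hj (DFinsupp.mem_support_iff.2 hne)
        rw [this]; simp }

lemma ofGraded_mem {ℳ : ℤ → AddSubgroup P} (h : IsGradedMod 𝒜 ℳ) (j : ℤ) (p : P) :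
    p ∈ ℳ j ↔ (ofGraded h).pr j p = p := by
  classical
  let _ := h.internal.chooseDecomposition
  change p ∈ ℳ j ↔ ((DirectSum.decompose ℳ p j : ℳ j) : P) = p
  constructor
  · intro hp; exact DirectSum.decompose_of_mem_same ℳ hp
  · intro hp; rw [← hp]; exact (DirectSum.decompose ℳ p j).2

/-- The grading of `∏ a, P(-deg a)` for a finite family of twists. -/
def pi {ι : Type} [Fintype ι] (g : Gr 𝒜 P) (deg : ι → ℤ) : Gr 𝒜 (ι → P) where
  pr j :=
    { toFun := fun z a => g.pr (j - deg a) (z a)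
      map_zero' := by funext a; simp
      map_add' := by intro y z; funext a; simp }
  pr_pr i j p := by
    funext a
    change g.pr (i - deg a) (g.pr (j - deg a) (p a)) = _
    rw [g.pr_pr]
    by_cases h : i = j
    · simp [h]
    · rw [if_neg h, if_neg (by omega)]; rfl
  fin p := by
    classical
    choose F hF hs using fun a => g.fin (p a)
    refine ⟨Finset.univ.biUnion fun a => (F a).image (· + deg a), ?_, ?_⟩
    · intro j hj
      funext a
      change g.pr (j - deg a) (p a) = 0
      apply hF
      intro hm
      exact hj (Finset.mem_biUnion.2 ⟨a, Finset.mem_univ _,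
        Finset.mem_image.2 ⟨_, hm, by ring⟩⟩)
    · funext a
      rw [Finset.sum_apply]
      change ∑ j ∈ _, g.pr (j - deg a) (p a) = p a
      have := g.sum_of_superset (hF a) (hs a)
        (G := (Finset.univ.biUnion fun a => (F a).image (· + deg a)).image (· - deg a)) (by
          intro l hl
          refine Finset.mem_image.2 ⟨l + deg a, Finset.mem_biUnion.2 ⟨a, Finset.mem_univ _,
            Finset.mem_image.2 ⟨_, hl, rfl⟩⟩, by ring⟩)
      rw [Finset.sum_image (by intro a _ b _ h; simpa using h)] at this
      exact this
  smul k j s p hs := by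
    funext a
    change g.pr (k + j - deg a) (s • p a) = s • g.pr (j - deg a) (p a)
    rw [add_sub_assoc]
    exact g.smul _ _ _ _ hs

lemma pi_apply {ι : Type} [Fintype ι] (g : Gr 𝒜 P) (deg : ι → ℤ) (j : ℤ) (z : ι → P) (a : ι) :
    (g.pi deg).pr j z a = g.pr (j - deg a) (z a) := rfl

/-- The induced grading of a graded submodule. -/
def sub (g : Gr 𝒜 P) (N : Submodule S P) (hN : ∀ j, ∀ q ∈ N, g.pr j q ∈ N) : Gr 𝒜 N where
  pr j :=
    { toFun := fun z => ⟨g.pr j z, hN j z z.2⟩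
      map_zero' := by ext; simp
      map_add' := by intro y z; ext; simp }
  pr_pr i j p := by
    ext
    change g.pr i (g.pr j p) = _
    rw [g.pr_pr]
    split_ifs <;> rfl
  fin p := by
    obtain ⟨F, hF, hs⟩ := g.fin (p : P)
    refine ⟨F, fun j hj => Subtype.ext (hF j hj), Subtype.ext ?_⟩
    rw [AddSubmonoidClass.coe_finsetSum]
    exact hs
  smul k j s p hs := by
    ext
    exact g.smul k j s p hs

/-- The induced grading of the quotient by a graded submodule. -/
def quot (g : Gr 𝒜 P) (N : Submodule S P) (hN : ∀ j, ∀ q ∈ N, g.pr j q ∈ N) :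
    Gr 𝒜 (P ⧸ N) where
  pr j := QuotientAddGroup.map N.toAddSubgroup N.toAddSubgroup (g.pr j) (fun q hq => hN j q hq)
  pr_pr i j p := by
    obtain ⟨p, rfl⟩ := Submodule.Quotient.mk_surjective N p
    change (Submodule.Quotient.mk (g.pr i (g.pr j p)) : P ⧸ N) = _
    rw [g.pr_pr]
    split_ifs <;> rfl
  fin p := by
    obtain ⟨p, rfl⟩ := Submodule.Quotient.mk_surjective N p
    obtain ⟨F, hF, hs⟩ := g.fin p
    refine ⟨F, fun j hj => ?_, ?_⟩
    · change (Submodule.Quotient.mk (g.pr j p) : P ⧸ N) = 0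
      rw [hF j hj]; rfl
    · change ∑ j ∈ F, (Submodule.mkQ N (g.pr j p)) = Submodule.mkQ N p
      rw [← map_sum, hs]
  smul k j s p hs := by
    obtain ⟨p, rfl⟩ := Submodule.Quotient.mk_surjective N p
    change (Submodule.Quotient.mk (g.pr (k + j) (s • p)) : P ⧸ N) = _
    rw [g.smul k j s p hs]; rfl

lemma smul_gen (g : Gr 𝒜 P) (gS : Gr 𝒜 S) (hS : ∀ k s, gS.pr k s ∈ 𝒜 k) (s : S) (p : P) :
    ∃ F : Finset ℤ, ∀ j, g.pr j (s • p) = ∑ k ∈ F, gS.pr k s • g.pr (j - k) p := by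
  obtain ⟨F, hF, hs⟩ := gS.fin s
  refine ⟨F, fun j => ?_⟩
  conv_lhs => rw [← hs, Finset.sum_smul, map_sum]
  refine Finset.sum_congr rfl fun k _ => ?_
  rw [← g.smul k (j - k) _ _ (hS k s)]
  congr 1
  ring_nf

end Gr

/-- Linear maps preserving degrees. -/
def GrHom (g : Gr 𝒜 P) (h : Gr 𝒜 Q) (f : P →ₗ[S] Q) : Prop :=
  ∀ j p, f (g.pr j p) = h.pr j (f p)

end Gradings

section Koszul

variable {S : Type} [CommRing S] {n : ℕ}
variable {P Q : Type} [AddCommGroup P] [Module S P] [AddCommGroup Q] [Module S Q]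

/-- The sign `(-1)^{#{a ∈ T, a < s}}` of the Koszul differential. -/
def sg (s : Fin n) (T : Finset (Fin n)) : ℤ := (-1) ^ ((T.filter (fun a => a < s)).card)

lemma sg_mul_self (s : Fin n) (T : Finset (Fin n)) : sg s T * sg s T = 1 := by
  unfold sg; rw [← mul_pow]; simp

lemma sg_insert_self (s : Fin n) (T : Finset (Fin n)) : sg s (insert s T) = sg s T := by
  unfold sg; rw [Finset.filter_insert, if_neg (lt_irrefl s)]

lemma sg_erase_self (s : Fin n) (T : Finset (Fin n)) : sg s (T.erase s) = sg s T := by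
  unfold sg
  rw [Finset.filter_erase, Finset.erase_eq_of_notMem]
  simp

lemma sg_insert (s r : Fin n) (T : Finset (Fin n)) (hr : r ∉ T) :
    sg s (insert r T) = (if r < s then -1 else 1) * sg s T := by
  unfold sg
  rw [Finset.filter_insert]
  split_ifs with h
  · rw [Finset.card_insert_of_notMem (by simp [hr]), pow_succ]; ring
  · simp

lemma sg_erase (s r : Fin n) (T : Finset (Fin n)) (hr : r ∈ T) :
    sg s (T.erase r) = (if r < s then -1 else 1) * sg s T := by
  conv_rhs => rw [← Finset.insert_erase hr]
  rw [sg_insert s r _ (Finset.notMem_erase r T)]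
  split_ifs <;> simp

/-- Exterior multiplication by the `s`-th basis vector on `⋀ Sⁿ ⊗ P`, the elements of which are
written as functions of the subset `T` indexing a basis vector of the exterior algebra. -/
def ext (S : Type) [CommRing S] (P : Type) [AddCommGroup P] [Module S P] (s : Fin n) :
    (Finset (Fin n) → P) →ₗ[S] (Finset (Fin n) → P) where
  toFun z T := if s ∈ T then sg s T • z (T.erase s) else 0
  map_add' y z := by funext T; simp only [Pi.add_apply]; split_ifs <;> simp
  map_smul' c z := by
    funext T; simp only [Pi.smul_apply, RingHom.id_apply]; split_ifs <;> simp [smul_comm _ c]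

/-- Contraction against the `s`-th dual basis vector. -/
def con (S : Type) [CommRing S] (P : Type) [AddCommGroup P] [Module S P] (s : Fin n) :
    (Finset (Fin n) → P) →ₗ[S] (Finset (Fin n) → P) where
  toFun z T := if s ∈ T then 0 else sg s T • z (insert s T)
  map_add' y z := by funext T; simp only [Pi.add_apply]; split_ifs <;> simp
  map_smul' c z := by
    funext T; simp only [Pi.smul_apply, RingHom.id_apply]; split_ifs <;> simp [smul_comm _ c]

lemma ext_apply (s : Fin n) (z : Finset (Fin n) → P) (T : Finset (Fin n)) :
    ext S P s z T = if s ∈ T then sg s T • z (T.erase s) else 0 := rfl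

lemma con_apply (s : Fin n) (z : Finset (Fin n) → P) (T : Finset (Fin n)) :
    con S P s z T = if s ∈ T then 0 else sg s T • z (insert s T) := rfl

lemma ext_ext (s : Fin n) (z : Finset (Fin n) → P) :
    ext S P s (ext S P s z) = 0 := by
  funext T
  simp [ext_apply]

lemma con_con (s : Fin n) (z : Finset (Fin n) → P) :
    con S P s (con S P s z) = 0 := by
  funext T
  simp [con_apply]

lemma con_ext_self (s : Fin n) (z : Finset (Fin n) → P) :
    con S P s (ext S P s z) + ext S P s (con S P s z) = z := by
  funext T
  simp only [Pi.add_apply, con_apply, ext_apply]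
  by_cases h : s ∈ T
  · simp [h, smul_smul, sg_erase_self, sg_mul_self, Finset.insert_erase]
  · simp [h, smul_smul, sg_insert_self, sg_mul_self]

lemma ext_anti {s r : Fin n} (h : s ≠ r) (z : Finset (Fin n) → P) :
    ext S P s (ext S P r z) = - ext S P r (ext S P s z) := by
  funext T
  simp only [Pi.neg_apply, ext_apply]
  by_cases hs : s ∈ T <;> by_cases hr : r ∈ T <;>
    simp [hs, hr, h, h.symm]
  rw [smul_smul, smul_smul, ← neg_smul, sg_erase _ _ _ hs, sg_erase _ _ _ hr,
    Finset.erase_right_comm]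
  congr 1
  rcases lt_or_gt_of_ne h with h1 | h1
  · rw [if_pos h1, if_neg h1.not_gt]; ring
  · rw [if_pos h1, if_neg h1.not_gt]; ring

lemma con_ext {s r : Fin n} (h : s ≠ r) (z : Finset (Fin n) → P) :
    con S P s (ext S P r z) = - ext S P r (con S P s z) := by
  funext T
  simp only [Pi.neg_apply, ext_apply, con_apply]
  by_cases hs : s ∈ T <;> by_cases hr : r ∈ T <;>
    simp [hs, hr, h, h.symm]
  rw [smul_smul, smul_smul, ← neg_smul, sg_insert _ _ _ hs, sg_erase _ _ _ hr,
    Finset.erase_insert_of_ne h]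
  congr 1
  rcases lt_or_gt_of_ne h with h1 | h1
  · rw [if_pos h1, if_neg h1.not_gt]; ring
  · rw [if_pos h1, if_neg h1.not_gt]; ring

/-- The Koszul codifferential of the sequence `y`, on all cochains at once. -/
def D (y : Fin n → S) : (Finset (Fin n) → P) →ₗ[S] (Finset (Fin n) → P) :=
  ∑ s, y s • ext S P s

lemma D_eq (y : Fin n → S) (z : Finset (Fin n) → P) : D y z = ∑ s, y s • ext S P s z := by
  simp [D, LinearMap.sum_apply]

lemma D_apply (y : Fin n → S) (z : Finset (Fin n) → P) (T : Finset (Fin n)) :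
    D y z T = ∑ s ∈ T, sg s T • y s • z (T.erase s) := by
  rw [D_eq, Finset.sum_apply]
  simp only [Pi.smul_apply, ext_apply, smul_ite, smul_zero]
  rw [← Finset.sum_filter]
  simp only [Finset.filter_univ_mem]
  exact Finset.sum_congr rfl fun s _ => smul_comm _ _ _

lemma D_split (y : Fin n → S) (s : Fin n) (z : Finset (Fin n) → P) :
    D y z = D (Function.update y s 0) z + y s • ext S P s z := by
  rw [D_eq, D_eq, ← Finset.add_sum_erase _ _ (Finset.mem_univ s),
    ← Finset.add_sum_erase _ (fun r => Function.update y s 0 r • _) (Finset.mem_univ s)]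
  simp only [Function.update_self, zero_smul, zero_add]
  rw [add_comm]
  congr 1
  refine Finset.sum_congr rfl fun r hr => ?_
  rw [Function.update_of_ne (Finset.ne_of_mem_erase hr)]

lemma D_ext (y : Fin n → S) (s : Fin n) (z : Finset (Fin n) → P) :
    D (Function.update y s 0) (ext S P s z) = - ext S P s (D (Function.update y s 0) z) := by
  rw [D_eq, D_eq, map_sum, ← Finset.sum_neg_distrib]
  refine Finset.sum_congr rfl fun r _ => ?_
  by_cases h : r = s
  · subst h; simp
  · rw [ext_anti h, map_smul, smul_neg]

lemma con_D (y : Fin n → S) (s : Fin n) (z : Finset (Fin n) → P) :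
    con S P s (D (Function.update y s 0) z) = - D (Function.update y s 0) (con S P s z) := by
  rw [D_eq, D_eq, map_sum, ← Finset.sum_neg_distrib]
  refine Finset.sum_congr rfl fun r _ => ?_
  by_cases h : r = s
  · subst h; simp
  · rw [map_smul, con_ext (Ne.symm h), smul_neg]

lemma D_D (y : Fin n → S) (z : Finset (Fin n) → P) : D y (D y z) = 0 := by
  have key : ∀ U : Finset (Fin n), (∑ s ∈ U, y s • ext S P s
      (∑ r ∈ U, y r • ext S P r z)) = 0 := by
    intro U
    induction U using Finset.induction_on with
    | empty => simp
    | insert a U ha ih =>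
      rw [Finset.sum_insert ha, Finset.sum_insert ha]
      simp only [map_add, map_smul, smul_add, ext_ext, smul_zero, zero_add,
        Finset.sum_add_distrib, ih, add_zero]
      rw [map_sum, Finset.smul_sum, ← Finset.sum_add_distrib]
      refine Finset.sum_eq_zero fun r hr => ?_
      rw [ext_anti (fun h => ha (h ▸ hr) : r ≠ a), map_smul, smul_neg, smul_neg, smul_comm]
      exact add_neg_cancel _
  rw [D_eq, D_eq]
  exact key Finset.univ

lemma homotopy (y : Fin n → S) (s : Fin n) (z : Finset (Fin n) → P) :
    con S P s (D y z) + D y (con S P s z) = y s • z := by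
  rw [D_split y s z, D_split y s (con S P s z), map_add, con_D, map_smul]
  conv_rhs => rw [← con_ext_self (S := S) s z]
  rw [smul_add]
  abel

lemma D_map (y : Fin n → S) (f : P →ₗ[S] Q) (z : Finset (Fin n) → P) (T : Finset (Fin n)) :
    D y (fun T => f (z T)) T = f (D y z T) := by
  simp only [D_apply, map_sum, map_zsmul, map_smul]

end Koszul

/-! ### Koszul cohomology and short exact sequences -/

section Cohomology

variable {S : Type} [CommRing S] {𝒜 : ℤ → AddSubgroup S} {n : ℕ}
variable {A B C : Type} [AddCommGroup A] [Module S A] [AddCommGroup B] [Module S B]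
  [AddCommGroup C] [Module S C]

/-- `z` is a Koszul cochain of cohomological degree `i` and internal degree `j`, for the sequence
of exponents `m`. The cohomological degree is an integer, so that degree `i - 1` makes sense for
`i = 0`, where it forces `z = 0`. -/
def Hm (g : Gr 𝒜 A) (m : Fin n → ℕ) (i j : ℤ) (z : Finset (Fin n) → A) : Prop :=
  ∀ T, ((T.card : ℤ) ≠ i → z T = 0) ∧ g.pr (j + ∑ s ∈ T, (m s : ℤ)) (z T) = z T

/-- The sequence of powers `x_s ^ m_s`. -/
def pw (x : Fin n → S) (m : Fin n → ℕ) : Fin n → S := fun s => x s ^ m s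

/-- The transition map between the Koszul complexes with exponents `m ≤ m'`. -/
def push (A : Type) [AddCommGroup A] [Module S A] (x : Fin n → S) (m m' : Fin n → ℕ) :
    (Finset (Fin n) → A) →ₗ[S] (Finset (Fin n) → A) where
  toFun z T := (∏ s ∈ T, x s ^ (m' s - m s)) • z T
  map_add' y z := by funext T; simp
  map_smul' c z := by funext T; simp [smul_comm _ c]

lemma push_apply (x : Fin n → S) (m m' : Fin n → ℕ) (z : Finset (Fin n) → A) (T) :
    push A x m m' z T = (∏ s ∈ T, x s ^ (m' s - m s)) • z T := rfl

lemma push_self (x : Fin n → S) (m : Fin n → ℕ) (z : Finset (Fin n) → A) :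
    push A x m m z = z := by
  funext T; simp [push_apply]

lemma push_push (x : Fin n → S) {m m' m'' : Fin n → ℕ} (h : m ≤ m') (h' : m' ≤ m'')
    (z : Finset (Fin n) → A) : push A x m' m'' (push A x m m' z) = push A x m m'' z := by
  funext T
  simp only [push_apply, smul_smul, ← Finset.prod_mul_distrib, ← pow_add]
  congr 1
  refine Finset.prod_congr rfl fun s _ => ?_
  have h1 : m s ≤ m' s := h s
  have h2 : m' s ≤ m'' s := h' s
  congr 1
  omega

lemma push_D (x : Fin n → S) {m m' : Fin n → ℕ} (h : m ≤ m') (z : Finset (Fin n) → A) :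
    push A x m m' (D (pw x m) z) = D (pw x m') (push A x m m' z) := by
  funext T
  rw [push_apply, D_apply, D_apply, Finset.smul_sum]
  refine Finset.sum_congr rfl fun s hs => ?_
  rw [smul_comm, push_apply, smul_smul, smul_smul, ← Finset.mul_prod_erase _ _ hs]
  congr 2
  simp only [pw]
  have : m' s = (m' s - m s) + m s := by have h1 : m s ≤ m' s := h s; omega
  conv_rhs => rw [this, pow_add]
  ring

lemma push_map (x : Fin n → S) (m m' : Fin n → ℕ) (f : A →ₗ[S] B) (z : Finset (Fin n) → A) :
    push B x m m' (fun T => f (z T)) = fun T => f (push A x m m' z T) := by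
  funext T; simp [push_apply]

lemma D_map' (y : Fin n → S) (f : A →ₗ[S] B) (z : Finset (Fin n) → A) :
    D y (fun T => f (z T)) = fun T => f (D y z T) := by
  funext T; exact D_map y f z T

section Hm

variable {g : Gr 𝒜 A} {g' : Gr 𝒜 B} {m : Fin n → ℕ} {i j : ℤ}

lemma Hm.add {y z : Finset (Fin n) → A} (hy : Hm g m i j y) (hz : Hm g m i j z) :
    Hm g m i j (y + z) := fun T =>
  ⟨fun h => by rw [Pi.add_apply, (hy T).1 h, (hz T).1 h, add_zero],
    by rw [Pi.add_apply, map_add, (hy T).2, (hz T).2]⟩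

lemma Hm.sub {y z : Finset (Fin n) → A} (hy : Hm g m i j y) (hz : Hm g m i j z) :
    Hm g m i j (y - z) := fun T =>
  ⟨fun h => by rw [Pi.sub_apply, (hy T).1 h, (hz T).1 h, sub_zero],
    by rw [Pi.sub_apply, map_sub, (hy T).2, (hz T).2]⟩

lemma Hm.zero : Hm g m i j (0 : Finset (Fin n) → A) := fun T => ⟨fun _ => rfl, by simp⟩

lemma Hm.map {f : A →ₗ[S] B} (hf : GrHom g g' f) {z : Finset (Fin n) → A}
    (hz : Hm g m i j z) : Hm g' m i j (fun T => f (z T)) := fun T =>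
  ⟨fun h => by simp [(hz T).1 h], by rw [← hf, (hz T).2]⟩

lemma Hm.of_map {f : A →ₗ[S] B} (hf : GrHom g g' f) (hi : Function.Injective f)
    {z : Finset (Fin n) → A} (hz : Hm g' m i j (fun T => f (z T))) : Hm g m i j z := fun T =>
  ⟨fun h => hi (((hz T).1 h).trans (map_zero f).symm), hi (by rw [hf, (hz T).2])⟩

lemma Hm.lift {f : A →ₗ[S] B} (hf : GrHom g g' f) (hs : Function.Surjective f)
    {z : Finset (Fin n) → B} (hz : Hm g' m i j z) :
    ∃ w, Hm g m i j w ∧ (fun T => f (w T)) = z := by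
  choose v hv using fun T => hs (z T)
  refine ⟨fun T => if (T.card : ℤ) = i then g.pr (j + ∑ s ∈ T, (m s : ℤ)) (v T) else 0,
    fun T => ⟨fun h => if_neg h, ?_⟩, ?_⟩
  · dsimp only
    split_ifs
    · exact g.pr_same _ _
    · simp
  · funext T
    dsimp only
    split_ifs with h
    · rw [hf, hv, (hz T).2]
    · rw [map_zero, (hz T).1 h]

lemma Hm.smul {z : Finset (Fin n) → A} {k : ℤ} {s : S} (hs : s ∈ 𝒜 k) (hz : Hm g m i j z) :
    Hm g m i (k + j) (s • z) := fun T =>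
  ⟨fun h => by rw [Pi.smul_apply, (hz T).1 h, smul_zero],
    g.smul_fix hs (hz T).2 (by ring)⟩

lemma Hm.eq_zero_of_neg {z : Finset (Fin n) → A} (hz : Hm g m i j z) (hi : i < 0) : z = 0 := by
  funext T
  exact (hz T).1 (by have := Int.natCast_nonneg T.card; omega)

variable {x : Fin n → S}

lemma Hm.D (hx : ∀ k s, x s ^ k ∈ 𝒜 (k : ℕ)) {z : Finset (Fin n) → A} (hz : Hm g m i j z) :
    Hm g m (i + 1) j (D (pw x m) z) := fun T => by
  rw [D_apply]
  constructor
  · intro h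
    refine Finset.sum_eq_zero fun s hs => ?_
    rw [(hz _).1, smul_zero, smul_zero]
    rw [Finset.card_erase_of_mem hs]
    have := Finset.card_pos.2 ⟨s, hs⟩
    omega
  · rw [map_sum]
    refine Finset.sum_congr rfl fun s hs => ?_
    refine g.zsmul_fix _ (g.smul_fix (hx _ _) (hz _).2 ?_)
    rw [← Finset.add_sum_erase _ _ hs]
    ring

lemma prod_pow_mem (h1 : (1 : S) ∈ 𝒜 0)
    (hm : ∀ {i j : ℤ} {a b : S}, a ∈ 𝒜 i → b ∈ 𝒜 j → a * b ∈ 𝒜 (i + j))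
    (hx : ∀ k s, x s ^ k ∈ 𝒜 (k : ℕ)) (T : Finset (Fin n)) (e : Fin n → ℕ) :
    (∏ s ∈ T, x s ^ e s) ∈ 𝒜 (∑ s ∈ T, (e s : ℤ)) := by
  induction T using Finset.induction_on with
  | empty => simpa using h1
  | insert a T ha ih =>
    rw [Finset.prod_insert ha, Finset.sum_insert ha]
    exact hm (hx _ _) ih

/-- Cochains may be replaced by their component of given degrees in an equation `D w = z`. -/
lemma Hm.proj (hx : ∀ k s, x s ^ k ∈ 𝒜 (k : ℕ)) {z w : Finset (Fin n) → A}
    (hz : Hm g m i j z) (h : RegTor.D (pw x m) w = z) :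
    ∃ w', Hm g m (i - 1) j w' ∧ RegTor.D (pw x m) w' = z := by
  refine ⟨fun T => if (T.card : ℤ) = i - 1 then g.pr (j + ∑ s ∈ T, (m s : ℤ)) (w T) else 0,
    fun T => ⟨fun h => if_neg h, ?_⟩, ?_⟩
  · dsimp only
    split_ifs
    · exact g.pr_same _ _
    · simp
  · funext T
    by_cases hT : (T.card : ℤ) = i
    · rw [← (hz T).2, ← h, D_apply, D_apply, map_sum]
      refine Finset.sum_congr rfl fun s hs => ?_
      rw [if_pos, map_zsmul, ← g.smul (m s) _ (pw x m s) _ (hx (m s) s)]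
      · rw [← Finset.add_sum_erase _ _ hs]
        congr 3
        ring
      · rw [Finset.card_erase_of_mem hs]
        have := Finset.card_pos.2 ⟨s, hs⟩
        omega
    · rw [(hz T).1 hT, D_apply]
      refine Finset.sum_eq_zero fun s hs => ?_
      rw [if_neg, smul_zero, smul_zero]
      rw [Finset.card_erase_of_mem hs]
      have := Finset.card_pos.2 ⟨s, hs⟩
      omega

end Hm

/-- The basic facts on the degree-one elements `x` and the grading used throughout. -/
structure Ctx (𝒜 : ℤ → AddSubgroup S) (x : Fin n → S) : Prop where
  one : (1 : S) ∈ 𝒜 0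
  mul : ∀ {i j : ℤ} {a b : S}, a ∈ 𝒜 i → b ∈ 𝒜 j → a * b ∈ 𝒜 (i + j)
  pow : ∀ k s, x s ^ k ∈ 𝒜 (k : ℕ)

lemma Hm.push {x : Fin n → S} (c : Ctx 𝒜 x) {g : Gr 𝒜 A} {m m' : Fin n → ℕ} (h : m ≤ m')
    {i j : ℤ} {z : Finset (Fin n) → A} (hz : Hm g m i j z) :
    Hm g m' i j (push A x m m' z) := fun T => by
  rw [push_apply]
  refine ⟨fun hT => by rw [(hz T).1 hT, smul_zero], ?_⟩
  refine g.smul_fix (prod_pow_mem c.one c.mul c.pow T _) (hz T).2 ?_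
  rw [add_left_comm, ← Finset.sum_add_distrib]
  congr 1
  refine Finset.sum_congr rfl fun s _ => ?_
  have h1 : m s ≤ m' s := h s
  omega

/-- Vanishing in cohomological degree `i` and internal degree `j` of the cohomology of the colimit
of the Koszul complexes with exponents `φ 0 ≤ φ 1 ≤ …`. For `φ t = (t, …, t)` this is vanishing
of local cohomology, and for constant `φ` it is vanishing of Koszul cohomology. -/
def V (x : Fin n → S) (φ : ℕ → Fin n → ℕ) (g : Gr 𝒜 A) (i j : ℤ) : Prop :=
  ∀ t z, Hm g (φ t) i j z → D (pw x (φ t)) z = 0 →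
    ∃ t', t ≤ t' ∧ ∃ w, Hm g (φ t') (i - 1) j w ∧
      D (pw x (φ t')) w = push A x (φ t) (φ t') z

variable {x : Fin n → S} {φ : ℕ → Fin n → ℕ} {gA : Gr 𝒜 A} {gB : Gr 𝒜 B} {gC : Gr 𝒜 C}

/-- A short exact sequence of graded modules with degree-preserving maps. -/
structure SES (gA : Gr 𝒜 A) (gB : Gr 𝒜 B) (gC : Gr 𝒜 C) (f : A →ₗ[S] B) (g : B →ₗ[S] C) :
    Prop where
  hf : GrHom gA gB f
  hg : GrHom gB gC g
  inj : Function.Injective f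
  surj : Function.Surjective g
  exact : ∀ b, g b = 0 ↔ ∃ a, f a = b

lemma SES.lift_ker {f : A →ₗ[S] B} {g : B →ₗ[S] C} (h : SES gA gB gC f g) {m : Fin n → ℕ}
    {i j : ℤ} {z : Finset (Fin n) → B} (hz : Hm gB m i j z) (h0 : ∀ T, g (z T) = 0) :
    ∃ a, Hm gA m i j a ∧ (fun T => f (a T)) = z := by
  choose a ha using fun T => (h.exact (z T)).1 (h0 T)
  have e : (fun T => f (a T)) = z := funext ha
  exact ⟨a, Hm.of_map h.hf h.inj (by rw [e]; exact hz), e⟩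

lemma eq_zero_of_map {f : A →ₗ[S] B} (hi : Function.Injective f) {a : Finset (Fin n) → A}
    (h : (fun T => f (a T)) = 0) : a = 0 := by
  funext T
  exact hi (by rw [Pi.zero_apply, map_zero]; exact congrFun h T)

/-- Exactness of `H^i A → H^i B → H^i C`. -/
lemma V_mid (c : Ctx 𝒜 x) (hφ : Monotone φ) {f : A →ₗ[S] B} {g : B →ₗ[S] C}
    (h : SES gA gB gC f g) {i j : ℤ} (hA : V x φ gA i j) (hC : V x φ gC i j) :
    V x φ gB i j := by
  intro t z hz hDz
  obtain ⟨t1, h1, w1, hw1, e1⟩ := hC t _ (hz.map h.hg) (by rw [D_map', hDz]; funext T; simp)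
  obtain ⟨w, hw, rfl⟩ := Hm.lift h.hg h.surj hw1
  have hd : Hm gB (φ t1) i j (push B x (φ t) (φ t1) z - D (pw x (φ t1)) w) := by
    refine (hz.push c (hφ h1)).sub ?_
    have := hw.D c.pow
    rwa [sub_add_cancel] at this
  obtain ⟨a, ha, ea⟩ := h.lift_ker hd (fun T => by
    rw [D_map', push_map] at e1
    have := congrFun e1 T
    rw [Pi.sub_apply, map_sub, this, sub_self])
  obtain ⟨t2, h2, v, hv, e2⟩ := hA t1 a ha (eq_zero_of_map h.inj (by
    rw [← D_map', ea, map_sub, ← push_D x (hφ h1), hDz, D_D]; simp))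
  refine ⟨t2, h1.trans h2, push B x (φ t1) (φ t2) w + fun T => f (v T),
    (hw.push c (hφ h2)).add (hv.map h.hf), ?_⟩
  rw [map_add, D_map', e2, ← push_map, ea, map_sub, push_push x (hφ h1) (hφ h2),
    ← push_D x (hφ h2)]
  abel

/-- Exactness of `H^i B → H^i C → H^{i+1} A`. -/
lemma V_right (c : Ctx 𝒜 x) (hφ : Monotone φ) {f : A →ₗ[S] B} {g : B →ₗ[S] C}
    (h : SES gA gB gC f g) {i j : ℤ} (hB : V x φ gB i j) (hA : V x φ gA (i + 1) j) :
    V x φ gC i j := by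
  intro t z hz hDz
  obtain ⟨b, hb, rfl⟩ := Hm.lift h.hg h.surj hz
  rw [D_map'] at hDz
  obtain ⟨a, ha, ea⟩ := h.lift_ker (hb.D c.pow) (fun T => congrFun hDz T)
  obtain ⟨t1, h1, w, hw, e1⟩ := hA t a ha (eq_zero_of_map h.inj (by
    rw [← D_map', ea, D_D]))
  rw [add_sub_cancel_right] at hw
  obtain ⟨t2, h2, v, hv, e2⟩ := hB t1 (push B x (φ t) (φ t1) b - fun T => f (w T))
    ((hb.push c (hφ h1)).sub (hw.map h.hf)) (by
      rw [map_sub, ← push_D x (hφ h1), D_map', e1, ← push_map, ea, sub_self])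
  refine ⟨t2, h1.trans h2, _, hv.map h.hg, ?_⟩
  rw [D_map', e2, map_sub, push_push x (hφ h1) (hφ h2), push_map, push_map]
  funext T
  have : g (f (push A x (φ t1) (φ t2) w T)) = 0 := (h.exact _).2 ⟨_, rfl⟩
  simp [this]

/-- Exactness of `H^{i-1} C → H^i A → H^i B`. -/
lemma V_left (c : Ctx 𝒜 x) (hφ : Monotone φ) {f : A →ₗ[S] B} {g : B →ₗ[S] C}
    (h : SES gA gB gC f g) {i j : ℤ} (hC : V x φ gC (i - 1) j) (hB : V x φ gB i j) :
    V x φ gA i j := by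
  intro t z hz hDz
  obtain ⟨t1, h1, w, hw, e1⟩ := hB t _ (hz.map h.hf) (by rw [D_map', hDz]; funext T; simp)
  rw [push_map] at e1
  obtain ⟨t2, h2, v, hv, e2⟩ := hC t1 _ (hw.map h.hg) (by
    rw [D_map', e1]; funext T; exact (h.exact _).2 ⟨_, rfl⟩)
  obtain ⟨v, hv', rfl⟩ := Hm.lift h.hg h.surj hv
  obtain ⟨a, ha, ea⟩ := h.lift_ker
    (z := push B x (φ t1) (φ t2) w - D (pw x (φ t2)) v)
    ((hw.push c (hφ h2)).sub (by
      have := hv'.D c.pow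
      rwa [sub_add_cancel] at this)) (fun T => by
    rw [D_map', push_map] at e2
    have := congrFun e2 T
    rw [Pi.sub_apply, map_sub, this, sub_self])
  refine ⟨t2, h1.trans h2, a, ha, ?_⟩
  have : (fun T => f (D (pw x (φ t2)) a T)) = fun T => f (push A x (φ t) (φ t2) z T) := by
    rw [← D_map', ea, map_sub, D_D, sub_zero, ← push_D x (hφ h2), e1, push_map,
      push_push x (hφ h1) (hφ h2)]
  funext T
  exact h.inj (congrFun this T)

lemma V_equiv (e : A ≃ₗ[S] B) (he : GrHom gA gB e.toLinearMap) {i j : ℤ} (hA : V x φ gA i j) :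
    V x φ gB i j := by
  have he' : GrHom gB gA e.symm.toLinearMap := fun k p => by
    apply e.injective
    have := he k (e.symm p)
    simp only [LinearEquiv.coe_coe, LinearEquiv.apply_symm_apply] at this ⊢
    exact this.symm
  intro t z hz hDz
  obtain ⟨t', h, w, hw, e1⟩ := hA t _ (hz.map he') (by rw [D_map', hDz]; funext T; simp)
  refine ⟨t', h, _, hw.map he, ?_⟩
  rw [D_map', e1, push_map]
  funext T
  simp

lemma V_of_subsingleton [Subsingleton A] {i j : ℤ} : V x φ gA i j := fun t _ _ _ =>
  ⟨t, le_rfl, 0, Hm.zero, funext fun _ => Subsingleton.elim _ _⟩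

lemma V_of_neg {i j : ℤ} (hi : i < 0) : V x φ gA i j := fun t z hz _ =>
  ⟨t, le_rfl, 0, Hm.zero, by rw [hz.eq_zero_of_neg hi]; simp⟩

lemma Hm.pi {ι : Type} [Fintype ι] {deg : ι → ℤ} {m : Fin n → ℕ} {i j : ℤ}
    {z : Finset (Fin n) → ι → A} :
    Hm (gA.pi deg) m i j z ↔ ∀ a, Hm gA m i (j - deg a) (fun T => z T a) := by
  constructor
  · intro h a T
    refine ⟨fun hT => congrFun ((h T).1 hT) a, ?_⟩
    have := congrFun (h T).2 a
    rw [Gr.pi_apply] at this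
    convert this using 2
    congr 1
    ring
  · intro h T
    refine ⟨fun hT => funext fun a => (h a T).1 hT, funext fun a => ?_⟩
    rw [Gr.pi_apply]
    have := (h a T).2
    convert this using 2
    congr 1
    ring

lemma V_pi (c : Ctx 𝒜 x) (hφ : Monotone φ) {ι : Type} [Fintype ι] {deg : ι → ℤ} {i j : ℤ}
    (h : ∀ a, V x φ gA i (j - deg a)) : V x φ (gA.pi deg) i j := by
  intro t z hz hDz
  have hz' := Hm.pi.1 hz
  choose t' ht w hw e using fun a => h a t _ (hz' a) (by
    have := D_map' (pw x (φ t)) (LinearMap.proj (R := S) (φ := fun _ : ι => A) a) z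
    simp only [LinearMap.proj_apply] at this
    rw [this, hDz]; rfl)
  obtain ⟨t2, h2⟩ : ∃ t2, t ≤ t2 ∧ ∀ a, t' a ≤ t2 :=
    ⟨t + ∑ a, t' a, by omega, fun a => by
      have := Finset.single_le_sum (f := t') (fun _ _ => Nat.zero_le _) (Finset.mem_univ a)
      omega⟩
  refine ⟨t2, h2.1, fun T a => push A x (φ (t' a)) (φ t2) (w a) T, ?_, ?_⟩
  · rw [Hm.pi]
    exact fun a => (hw a).push c (hφ (h2.2 a))
  · funext T a
    have := D_map' (pw x (φ t2)) (LinearMap.proj (R := S) (φ := fun _ : ι => A) a)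
      (fun T a => push A x (φ (t' a)) (φ t2) (w a) T)
    simp only [LinearMap.proj_apply] at this
    rw [← congrFun this T, ← push_D x (hφ (h2.2 a)), e, push_push x (hφ (ht a)) (hφ (h2.2 a))]
    rfl

end Cohomology

/-! ### Raising the exponents of the Koszul complex -/

section Exponents

variable {S : Type} [CommRing S] {𝒜 : ℤ → AddSubgroup S} {n : ℕ}
variable {A : Type} [AddCommGroup A] [Module S A]

/-- Vanishing of the Koszul cohomology of the sequence `x_s ^ m_s`. -/
def KV (x : Fin n → S) (m : Fin n → ℕ) (g : Gr 𝒜 A) (i j : ℤ) : Prop :=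
  ∀ z, Hm g m i j z → D (pw x m) z = 0 → ∃ w, Hm g m (i - 1) j w ∧ D (pw x m) w = z

lemma V_const {x : Fin n → S} {m : Fin n → ℕ} {g : Gr 𝒜 A} {i j : ℤ} :
    V x (fun _ => m) g i j ↔ KV x m g i j := by
  constructor
  · intro h z hz hD
    obtain ⟨_, _, w, hw, e⟩ := h 0 z hz hD
    exact ⟨w, hw, by rw [e, push_self]⟩
  · intro h t z hz hD
    obtain ⟨w, hw, e⟩ := h z hz hD
    exact ⟨t, le_rfl, w, hw, by rw [e, push_self]⟩

/-- The restriction of a cochain to the subsets avoiding `s` has cohomological degree `i` and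
internal degree `j`. -/
def HF (g : Gr 𝒜 A) (m : Fin n → ℕ) (s : Fin n) (i j : ℤ) (u : Finset (Fin n) → A) : Prop :=
  ∀ T, s ∉ T → ((T.card : ℤ) ≠ i → u T = 0) ∧ g.pr (j + ∑ r ∈ T, (m r : ℤ)) (u T) = u T

section HF

variable {g : Gr 𝒜 A} {m : Fin n → ℕ} {s : Fin n} {i j : ℤ} {u v : Finset (Fin n) → A}

lemma HF.congr (hu : HF g m s i j u) (h : ∀ T, s ∉ T → v T = u T) : HF g m s i j v :=
  fun T hT => by rw [h T hT]; exact hu T hT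

lemma HF.add (hu : HF g m s i j u) (hv : HF g m s i j v) : HF g m s i j (u + v) := fun T hT =>
  ⟨fun h => by rw [Pi.add_apply, (hu T hT).1 h, (hv T hT).1 h, add_zero],
    by rw [Pi.add_apply, map_add, (hu T hT).2, (hv T hT).2]⟩

lemma HF.sub (hu : HF g m s i j u) (hv : HF g m s i j v) : HF g m s i j (u - v) := fun T hT =>
  ⟨fun h => by rw [Pi.sub_apply, (hu T hT).1 h, (hv T hT).1 h, sub_zero],
    by rw [Pi.sub_apply, map_sub, (hu T hT).2, (hv T hT).2]⟩

lemma HF.smul (hu : HF g m s i j u) {k l : ℤ} {a : S} (ha : a ∈ 𝒜 k) (hl : l = j + k) :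
    HF g m s i l (a • u) := fun T hT =>
  ⟨fun h => by rw [Pi.smul_apply, (hu T hT).1 h, smul_zero],
    g.smul_fix ha (hu T hT).2 (by rw [hl]; ring)⟩

lemma con_ext_of_notMem (s : Fin n) (z : Finset (Fin n) → A) {T : Finset (Fin n)} (hT : s ∉ T) :
    con S A s (ext S A s z) T = z T := by
  have := congrFun (con_ext_self (S := S) s z) T
  rwa [Pi.add_apply, ext_apply, if_neg hT, add_zero] at this

lemma HF.con_ext (hu : HF g m s i j u) : HF g m s i j (con S A s (ext S A s u)) :=
  hu.congr fun _ hT => con_ext_of_notMem s u hT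

lemma Hm_update {a : ℕ} {z : Finset (Fin n) → A} :
    Hm g (Function.update m s a) i j z ↔
      HF g m s i j z ∧ HF g m s (i - 1) (j + a) (con S A s z) := by
  have e1 : ∀ T, s ∉ T → ∑ r ∈ T, ((Function.update m s a r : ℕ) : ℤ) = ∑ r ∈ T, (m r : ℤ) :=
    fun T hT => Finset.sum_congr rfl fun r hr => by
      rw [Function.update_of_ne (by rintro rfl; exact hT hr)]
  constructor
  · intro h
    refine ⟨fun T hT => ⟨(h T).1, by rw [← e1 T hT]; exact (h T).2⟩, fun T hT => ?_⟩
    rw [con_apply, if_neg hT]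
    have := h (insert s T)
    rw [Finset.card_insert_of_notMem hT, Finset.sum_insert hT, e1 T hT,
      Function.update_self] at this
    refine ⟨fun hc => ?_, g.zsmul_fix _ ?_⟩
    · rw [this.1 (by push_cast; omega), smul_zero]
    · rw [add_assoc]; exact this.2
  · rintro ⟨h1, h2⟩ T
    by_cases hT : s ∈ T
    · have := h2 (T.erase s) (Finset.notMem_erase s T)
      rw [con_apply, if_neg (Finset.notMem_erase s T), Finset.insert_erase hT] at this
      have e3 : z T = sg s (T.erase s) • sg s (T.erase s) • z T := by
        rw [smul_smul, sg_mul_self, one_smul]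
      have hc := Finset.card_pos.2 ⟨s, hT⟩
      rw [Finset.card_erase_of_mem hT] at this
      refine ⟨fun hne => ?_, ?_⟩
      · rw [e3, this.1 (by omega), smul_zero]
      · rw [e3]
        refine g.zsmul_fix _ ?_
        rw [← Finset.add_sum_erase _ _ hT, e1 _ (Finset.notMem_erase s T), Function.update_self,
          ← add_assoc]
        exact this.2
    · refine ⟨(h1 T hT).1, ?_⟩
      rw [e1 T hT]
      exact (h1 T hT).2

lemma Hm_pair {a : ℕ} (hu : HF g m s i j u) (hv : HF g m s (i - 1) (j + a) v) :
    Hm g (Function.update m s a) i j (con S A s (ext S A s u) + ext S A s v) := by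
  rw [Hm_update]
  refine ⟨hu.congr fun T hT => ?_, hv.congr fun T hT => ?_⟩
  · rw [Pi.add_apply, con_ext_of_notMem s u hT, ext_apply, if_neg hT, add_zero]
  · rw [map_add, con_con, zero_add, con_ext_of_notMem s v hT]

end HF

section algebra

variable (y : Fin n → S) (s : Fin n) (z : Finset (Fin n) → A)

lemma con_ext_con : con S A s (ext S A s (con S A s z)) = con S A s z := by
  have := con_ext_self (S := S) s (con S A s z)
  rwa [con_con, map_zero, add_zero] at this

lemma ext_con_ext : ext S A s (con S A s (ext S A s z)) = ext S A s z := by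
  have := con_ext_self (S := S) s (ext S A s z)
  rwa [ext_ext, map_zero, zero_add] at this

lemma con_ext_D : con S A s (ext S A s (D (Function.update y s 0) z)) =
    D (Function.update y s 0) (con S A s (ext S A s z)) := by
  have := D_ext y s z
  rw [eq_comm, neg_eq_iff_eq_neg] at this
  rw [this, map_neg, con_D, neg_neg]

lemma D_pw_update (x : Fin n → S) (m : Fin n → ℕ) (a : ℕ) :
    D (pw x (Function.update m s a)) z =
      D (Function.update (pw x m) s 0) z + x s ^ a • ext S A s z := by
  have e : pw x (Function.update m s a) = Function.update (pw x m) s (x s ^ a) := by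
    funext r
    by_cases h : r = s
    · subst h; simp [pw]
    · simp [pw, h]
  rw [e, D_split _ s, Function.update_idem, Function.update_self]

variable {y s}

lemma parts_of_eq {α : S} {w z : Finset (Fin n) → A}
    (h : D (Function.update y s 0) w + α • ext S A s w = z) :
    D (Function.update y s 0) (con S A s (ext S A s w)) = con S A s (ext S A s z) ∧
    α • con S A s (ext S A s w) - D (Function.update y s 0) (con S A s w) = con S A s z := by
  subst h
  constructor
  · rw [map_add, map_add, map_smul, ext_ext, smul_zero, map_zero, add_zero, con_ext_D]
  · rw [map_add, map_smul, con_D]; abel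

lemma D_pair {α : S} (u v : Finset (Fin n) → A) :
    D (Function.update y s 0) (con S A s (ext S A s u) + ext S A s v) +
      α • ext S A s (con S A s (ext S A s u) + ext S A s v) =
    D (Function.update y s 0) (con S A s (ext S A s u)) +
      ext S A s (α • con S A s (ext S A s u) - D (Function.update y s 0) v) := by
  rw [map_add, map_add, D_ext, ext_ext, add_zero, map_sub, map_smul]
  abel

end algebra

variable {x : Fin n → S} {g : Gr 𝒜 A}

/-- Vanishing for the exponents `a` and `b` in one variable gives it for the exponent `a + b`. -/
lemma KV_update_add (c : Ctx 𝒜 x) {m : Fin n → ℕ} {s : Fin n} {a b : ℕ} {i j : ℤ}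
    (ha : KV x (Function.update m s a) g i j)
    (hb : KV x (Function.update m s b) g i (j + a)) :
    KV x (Function.update m s (a + b)) g i j := by
  intro z hz hD
  rw [D_pw_update] at hD
  obtain ⟨c1, c2⟩ := parts_of_eq hD
  rw [map_zero] at c1
  rw [map_zero, sub_eq_zero] at c2
  obtain ⟨f1, f2⟩ := Hm_update.1 hz
  obtain ⟨w, hw, ew⟩ := hb (con S A s (ext S A s (x s ^ a • z)) + ext S A s (con S A s z))
    (Hm_pair (f1.smul (c.pow a s) rfl) (by push_cast at f2; rwa [add_assoc])) (by
      rw [D_pw_update, D_pair, map_smul, map_smul, map_smul, c1, map_zero, smul_zero, zero_add, ← c2,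
        smul_smul, ← pow_add, add_comm b a, sub_self, map_zero])
  rw [D_pw_update] at ew
  obtain ⟨d1, d2⟩ := parts_of_eq ew
  simp only [map_add, map_smul, ext_con_ext, ext_ext, con_con, smul_zero, add_zero, zero_add,
    con_ext_con] at d1 d2
  obtain ⟨f3, f4⟩ := Hm_update.1 hw
  obtain ⟨w', hw', ew'⟩ := ha (con S A s (ext S A s z) + ext S A s (con S A s (ext S A s w)))
    (Hm_pair f1 f3.con_ext) (by
      rw [D_pw_update, D_pair, c1, map_zero, zero_add, d1, sub_self, map_zero])
  rw [D_pw_update] at ew'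
  obtain ⟨b1, b2⟩ := parts_of_eq ew'
  simp only [map_add, ext_con_ext, ext_ext, con_con, add_zero, zero_add] at b1 b2
  obtain ⟨f5, f6⟩ := Hm_update.1 hw'
  refine ⟨con S A s (ext S A s w') + ext S A s (x s ^ b • con S A s w' + con S A s w),
    Hm_pair f5 ((f6.smul (c.pow b s) (by push_cast; ring)).add
      (by push_cast; rwa [← add_assoc])), ?_⟩
  rw [D_pw_update, D_pair, b1]
  conv_rhs => rw [← con_ext_self (S := S) s z]
  congr 2
  rw [← d2, ← b2, map_add, map_smul, smul_sub, smul_smul, pow_add, mul_comm]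
  abel

/-- Injectivity of the transition map raising one exponent from `a` to `a + b`. -/
lemma push_inj (c : Ctx 𝒜 x) {m : Fin n → ℕ} {s : Fin n} {a b : ℕ} {i j : ℤ}
    (hb : KV x (Function.update m s b) g (i - 1) (j + a)) {z : Finset (Fin n) → A}
    (hz : Hm g (Function.update m s a) i j z) (hD : D (pw x (Function.update m s a)) z = 0)
    {w : Finset (Fin n) → A} (hw : Hm g (Function.update m s (a + b)) (i - 1) j w)
    (ew : D (pw x (Function.update m s (a + b))) w =
      push A x (Function.update m s a) (Function.update m s (a + b)) z) :
    ∃ w', Hm g (Function.update m s a) (i - 1) j w' ∧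
      D (pw x (Function.update m s a)) w' = z := by
  have ep : push A x (Function.update m s a) (Function.update m s (a + b)) z =
      con S A s (ext S A s z) + ext S A s (x s ^ b • con S A s z) := by
    have e0 : ∀ T : Finset (Fin n), s ∉ T →
        ∏ r ∈ T, x r ^ (Function.update m s (a + b) r - Function.update m s a r) = 1 := by
      intro T hT
      refine Finset.prod_eq_one fun r hr => ?_
      have : r ≠ s := fun h => hT (h ▸ hr)
      simp [Function.update_of_ne this]
    funext T
    rw [push_apply, Pi.add_apply, con_apply, ext_apply, ext_apply]
    by_cases hT : s ∈ T
    · rw [if_pos hT, if_pos hT, zero_add, Pi.smul_apply, con_apply,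
        if_neg (Finset.notMem_erase s T), Finset.insert_erase hT, smul_comm, smul_smul,
        sg_erase_self, sg_mul_self, one_smul, ← Finset.mul_prod_erase _ _ hT,
        e0 _ (Finset.notMem_erase s T)]
      simp
    · rw [if_neg hT, if_neg hT, if_pos (Finset.mem_insert_self _ _), e0 T hT, one_smul,
        Finset.erase_insert hT, sg_insert_self, smul_smul, sg_mul_self, one_smul, add_zero]
  rw [D_pw_update] at hD
  obtain ⟨c1, c2⟩ := parts_of_eq hD
  rw [map_zero] at c1
  rw [map_zero, sub_eq_zero] at c2
  rw [D_pw_update, ep] at ew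
  obtain ⟨d1, d2⟩ := parts_of_eq ew
  simp only [map_add, map_smul, ext_con_ext, ext_ext, con_con, smul_zero, add_zero, zero_add,
    con_ext_con] at d1 d2
  obtain ⟨f1, f2⟩ := Hm_update.1 hz
  obtain ⟨f3, f4⟩ := Hm_update.1 hw
  have hQ : HF g m s (i - 1) (j + a) (x s ^ a • con S A s (ext S A s w) - con S A s z) :=
    (f3.con_ext.smul (c.pow a s) rfl).sub f2
  have eQ : con S A s (ext S A s (x s ^ a • con S A s (ext S A s w) - con S A s z)) =
      x s ^ a • con S A s (ext S A s w) - con S A s z := by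
    rw [map_sub, map_sub, map_smul, map_smul, ext_con_ext, con_ext_con]
  obtain ⟨y, hy, ey⟩ := hb (con S A s (ext S A s (x s ^ a • con S A s (ext S A s w) -
    con S A s z)) + ext S A s (con S A s w)) (Hm_pair hQ (by push_cast at f4; rwa [add_assoc])) (by
      rw [D_pw_update, D_pair, eQ, map_sub, map_smul, d1, c2, sub_self, zero_add, smul_sub,
        ← d2, smul_smul, ← pow_add, add_comm b a]
      rw [sub_sub_cancel, sub_self, map_zero])
  rw [D_pw_update] at ey
  obtain ⟨b1, -⟩ := parts_of_eq ey
  rw [eQ, map_add, map_add, ext_ext, map_zero, add_zero, eQ] at b1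
  obtain ⟨f5, f6⟩ := Hm_update.1 hy
  refine ⟨con S A s (ext S A s w) + ext S A s (con S A s (ext S A s y)),
    Hm_pair f3 f5.con_ext, ?_⟩
  rw [D_pw_update, D_pair, d1, b1, sub_sub_cancel]
  exact con_ext_self s z

lemma update_dec {m : Fin n → ℕ} {s : Fin n} (hs : 2 ≤ m s) :
    Function.update m s ((m s - 1) + 1) = m := by
  rw [Nat.sub_add_cancel (by omega), Function.update_eq_self]

/-- Induction on sequences of exponents `m ≥ 1`, raising one exponent by one at a time. -/
lemma exp_induction {p : (Fin n → ℕ) → Prop} (h1 : p (fun _ => 1))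
    (hs : ∀ (m : Fin n → ℕ) (s : Fin n) (a : ℕ), (∀ r, 1 ≤ m r) → 1 ≤ a →
      p (Function.update m s a) → p (Function.update m s (a + 1)))
    (m : Fin n → ℕ) (hm : ∀ s, 1 ≤ m s) : p m := by
  induction hk : ∑ s, m s using Nat.strong_induction_on generalizing m with
  | _ k ih =>
    by_cases h : ∃ s, 2 ≤ m s
    · obtain ⟨s, h2⟩ := h
      have h3 := hs m s (m s - 1) hm (by omega) (ih (∑ r, Function.update m s (m s - 1) r) (by
        rw [← hk]
        refine Finset.sum_lt_sum (fun r _ => ?_) ⟨s, Finset.mem_univ s, by simp; omega⟩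
        by_cases hr : r = s
        · subst hr; simp
        · simp [hr]) _ (fun r => by
          by_cases hr : r = s
          · subst hr; simp; omega
          · simpa [hr] using hm r) rfl)
      rwa [update_dec h2] at h3
    · push Not at h
      have : m = fun _ => 1 := funext fun s => by have := hm s; have := h s; omega
      rwa [this]

lemma KV_exp (c : Ctx 𝒜 x) {i j₀ : ℤ} (h : ∀ j, j₀ ≤ j → KV x (fun _ => 1) g i j)
    (m : Fin n → ℕ) (hm : ∀ s, 1 ≤ m s) : ∀ j, j₀ ≤ j → KV x m g i j := by
  classical
  -- Strengthened so that any set of variables may be given the exponent one: this is the third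
  -- term of the exact sequence comparing the exponents `a` and `a + 1`.
  have key : ∀ U : Finset (Fin n), ∀ j, j₀ ≤ j →
      KV x (fun s => if s ∈ U then m s else 1) g i j := by
    intro U
    induction U using Finset.induction_on with
    | empty => simpa using h
    | insert s U hs ih =>
      have e : ∀ a, (Function.update (fun s => if s ∈ U then m s else 1) s a) =
          fun r => if r = s then a else if r ∈ U then m r else 1 := by
        intro a; funext r
        by_cases hr : r = s
        · subst hr; simp
        · simp [hr]
      have h1 : Function.update (fun s => if s ∈ U then m s else 1) s 1 =
          fun s => if s ∈ U then m s else 1 := by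
        apply Function.update_eq_self_iff.2
        simp [hs]
      have step : ∀ a, 1 ≤ a → ∀ j, j₀ ≤ j →
          KV x (Function.update (fun s => if s ∈ U then m s else 1) s a) g i j := by
        intro a ha
        induction a, ha using Nat.le_induction with
        | base => rw [h1]; exact ih
        | succ a ha iha =>
          intro j hj
          refine KV_update_add c (iha j hj) ?_
          rw [h1]
          exact ih _ (by omega)
      intro j hj
      have := step (m s) (hm s) j hj
      rw [e] at this
      convert this using 2 with r
      by_cases hr : r = s
      · subst hr; simp
      · simp [hr]
  simpa using key Finset.univ

/-- Vanishing of Koszul cohomology in the degrees `≥ j₀` gives vanishing of local cohomology there. -/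
lemma V_of_KV (c : Ctx 𝒜 x) {i j₀ : ℤ} (h : ∀ j, j₀ ≤ j → KV x (fun _ => 1) g i j) {j : ℤ}
    (hj : j₀ ≤ j) : V x (fun t _ => t) g i j := by
  intro t z hz hD
  have hle : (fun _ : Fin n => t) ≤ fun _ => t + 1 := fun _ => Nat.le_succ t
  obtain ⟨w, hw, e⟩ := KV_exp c h (fun _ => t + 1) (fun _ => by omega) j hj _
    (hz.push c hle) (by rw [← push_D x hle, hD, map_zero])
  exact ⟨t + 1, Nat.le_succ t, w, hw, e⟩

/-- A nonzero Koszul class in total degree `r` survives in local cohomology if the Koszul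
cohomology vanishes in the same and in higher total degrees for smaller cohomological degrees. -/
lemma survive (c : Ctx 𝒜 x) {i r : ℤ}
    (h : ∀ p j, p < i → r ≤ p + j → KV x (fun _ => 1) g p j)
    (hne : ¬ KV x (fun _ => 1) g i (r - i)) : ¬ V x (fun t _ => t) g i (r - i) := by
  intro hV
  apply hne
  intro z hz hD
  obtain ⟨t', ht, w, hw, e⟩ := hV 1 z hz hD
  have key : ∀ m : Fin n → ℕ, (∀ s, 1 ≤ m s) → (∃ w, Hm g m (i - 1) (r - i) w ∧
      D (pw x m) w = push A x (fun _ => 1) m z) →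
      ∃ w, Hm g (fun _ => 1) (i - 1) (r - i) w ∧ D (pw x fun _ => 1) w = z := by
    refine exp_induction ?_ ?_
    · rintro ⟨w, hw, e⟩
      exact ⟨w, hw, by rw [e, push_self]⟩
    · rintro m s a hm ha ih ⟨w, hw, e⟩
      have l1 : (fun _ => 1) ≤ Function.update m s a := fun r => by
        by_cases hr : r = s
        · subst hr; simpa using ha
        · simpa [hr] using hm r
      have l2 : Function.update m s a ≤ Function.update m s (a + 1) := fun r => by
        by_cases hr : r = s
        · subst hr; simp
        · simp [hr]
      apply ih
      refine push_inj (b := 1) c ?_ (hz.push c l1) (by rw [← push_D x l1, hD, map_zero]) hw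
        (by rw [e, push_push x l1 l2])
      refine KV_exp c (j₀ := r - (i - 1)) (fun j hj => h _ _ (by omega) (by omega)) _
        (fun r => ?_) _ (by omega)
      by_cases hr : r = s
      · subst hr; simp
      · simpa [hr] using hm r
  exact key (fun _ => t') (fun _ => ht) ⟨w, hw, e⟩

end Exponents

/-! ### Koszul regularity and regularity -/

section Base

variable {S : Type} [CommRing S] {𝒜 : ℤ → AddSubgroup S} {n : ℕ} {x : Fin n → S}

lemma isGradedMod_self (hS : IsStdGraded 𝒜) : IsGradedMod 𝒜 𝒜 :=
  ⟨hS.internal, fun hs hm => hS.mul_mem hs hm⟩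

/-- The grading of the ring as a module over itself. -/
noncomputable def gS (hS : IsStdGraded 𝒜) : Gr 𝒜 S := Gr.ofGraded (isGradedMod_self hS)

lemma gS_mem (hS : IsStdGraded 𝒜) {j : ℤ} {s : S} : s ∈ 𝒜 j ↔ (gS hS).pr j s = s :=
  Gr.ofGraded_mem _ j s

lemma gS_pr_mem (hS : IsStdGraded 𝒜) (j : ℤ) (s : S) : (gS hS).pr j s ∈ 𝒜 j :=
  (gS_mem hS).2 ((gS hS).pr_same j s)

lemma ctx (hS : IsStdGraded 𝒜) (hx : GensDegOne 𝒜 x) : Ctx 𝒜 x where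
  one := hS.one_mem
  mul := hS.mul_mem
  pow k s := by
    induction k with
    | zero => simpa using hS.one_mem
    | succ k ih =>
      rw [pow_succ]
      push_cast
      exact hS.mul_mem ih (hx.1 s)

lemma mem_one (hx : GensDegOne 𝒜 x) {s : S} (hs : s ∈ 𝒜 1) : s ∈ Ideal.span (Set.range x) := by
  refine AddSubgroup.closure_induction (fun y hy => ?_) (zero_mem _) (fun _ _ _ _ => add_mem)
    (fun _ _ => neg_mem) (hx.2 s hs)
  obtain ⟨r, _, i, rfl⟩ := hy
  exact Ideal.mul_mem_left _ _ (Ideal.subset_span ⟨i, rfl⟩)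

lemma mem_pow (hS : IsStdGraded 𝒜) (hx : GensDegOne 𝒜 x) (d : ℕ) {s : S} (hs : s ∈ 𝒜 (d : ℤ)) :
    s ∈ Ideal.span (Set.range x) ^ d := by
  induction d generalizing s with
  | zero => simp
  | succ d ih =>
    refine AddSubgroup.closure_induction (fun y hy => ?_) (zero_mem _) (fun _ _ _ _ => add_mem)
      (fun _ _ => neg_mem) (hS.gen_one d (Int.natCast_nonneg d) s (by push_cast at hs; exact hs))
    obtain ⟨r, hr, b, hb, rfl⟩ := hy
    rw [pow_succ']
    exact Ideal.mul_mem_mul (mem_one hx hr) (ih hb)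

lemma mem_of_pos (hS : IsStdGraded 𝒜) (hx : GensDegOne 𝒜 x) {d : ℤ} (hd : 0 < d) {s : S}
    (hs : s ∈ 𝒜 d) : s ∈ Ideal.span (Set.range x) := by
  obtain ⟨d, rfl⟩ := Int.eq_ofNat_of_zero_le hd.le
  exact Ideal.pow_le_self (by omega) (mem_pow hS hx d hs)

section Bounds

variable {Q : Type} [AddCommGroup Q] [Module S Q]

lemma Gr.exists_bound (g : Gr 𝒜 Q) (G : Finset Q) :
    ∃ B : ℤ, ∀ q ∈ G, (∀ j, B < j → g.pr j q = 0) ∧ ∀ j, j < -B → g.pr j q = 0 := by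
  classical
  choose F hF _ using g.fin
  obtain ⟨B, hB⟩ := (((G.biUnion F).image fun j => |j|)).exists_le
  refine ⟨B, fun q hq => ?_⟩
  have key : ∀ j, j ∈ F q → |j| ≤ B := fun j hj =>
    hB _ (Finset.mem_image.2 ⟨j, Finset.mem_biUnion.2 ⟨q, hq, hj⟩, rfl⟩)
  constructor
  · intro j hj
    by_contra h
    have := key j (by by_contra h'; exact h (hF q j h'))
    have := le_abs_self j
    omega
  · intro j hj
    by_contra h
    have := key j (by by_contra h'; exact h (hF q j h'))
    have := neg_abs_le j
    omega

variable [Module.Finite S Q]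

/-- In large degrees a finitely generated graded module agrees with its product with `S₊`. -/
lemma Gr.bdd_above (hS : IsStdGraded 𝒜) (hx : GensDegOne 𝒜 x) (g : Gr 𝒜 Q) :
    ∃ B : ℤ, ∀ q : Q, ∀ j, B < j →
      g.pr j q ∈ Ideal.span (Set.range x) • (⊤ : Submodule S Q) := by
  obtain ⟨G, hG⟩ := Module.Finite.fg_top (R := S) (M := Q)
  obtain ⟨B, hB⟩ := g.exists_bound G
  refine ⟨B, fun q => ?_⟩
  have hq : q ∈ Submodule.span S (G : Set Q) := hG ▸ Submodule.mem_top
  induction hq using Submodule.span_induction with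
  | mem q h => exact fun j hj => by rw [(hB q h).1 j hj]; exact zero_mem _
  | zero => exact fun j _ => by rw [map_zero]; exact zero_mem _
  | add p q _ _ hp hq => exact fun j hj => by rw [map_add]; exact add_mem (hp j hj) (hq j hj)
  | smul s q _ hq =>
    intro j hj
    obtain ⟨F, hF⟩ := g.smul_gen (gS hS) (gS_pr_mem hS) s q
    rw [hF]
    refine Submodule.sum_mem _ fun k _ => ?_
    by_cases hk : 0 < k
    · exact Submodule.smul_mem_smul (mem_of_pos hS hx hk (gS_pr_mem hS k s)) trivial
    · exact Submodule.smul_mem _ _ (hq _ (by omega))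

lemma Gr.bdd_below (hS : IsStdGraded 𝒜) (g : Gr 𝒜 Q) :
    ∃ B : ℤ, ∀ q : Q, ∀ j, j < B → g.pr j q = 0 := by
  obtain ⟨G, hG⟩ := Module.Finite.fg_top (R := S) (M := Q)
  obtain ⟨B, hB⟩ := g.exists_bound G
  refine ⟨-B, fun q => ?_⟩
  have hq : q ∈ Submodule.span S (G : Set Q) := hG ▸ Submodule.mem_top
  induction hq using Submodule.span_induction with
  | mem q h => exact (hB q h).2
  | zero => exact fun j _ => map_zero _
  | add p q _ _ hp hq => exact fun j hj => by rw [map_add, hp j hj, hq j hj, add_zero]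
  | smul s q _ hq =>
    intro j hj
    obtain ⟨F, hF⟩ := g.smul_gen (gS hS) (gS_pr_mem hS) s q
    rw [hF]
    refine Finset.sum_eq_zero fun k _ => ?_
    by_cases hk : 0 ≤ k
    · rw [hq _ (by omega), smul_zero]
    · have := gS_pr_mem hS k s
      rw [hS.bot_of_neg k (by omega), AddSubgroup.mem_bot] at this
      rw [this, zero_smul]

end Bounds

end Base

section Regularity

variable {S : Type} [CommRing S] {𝒜 : ℤ → AddSubgroup S} {n : ℕ}
  {x : Fin n → S} {P : Type} [AddCommGroup P] [Module S P]

lemma pw_one (x : Fin n → S) : pw x (fun _ => 1) = x := by funext s; simp [pw]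

lemma Hm.eq_zero_of_gt {g : Gr 𝒜 P} {m : Fin n → ℕ} {i j : ℤ} {z : Finset (Fin n) → P}
    (hz : Hm g m i j z) (hi : (n : ℤ) < i) : z = 0 := by
  funext T
  refine (hz T).1 ?_
  have := T.card_le_univ
  rw [Fintype.card_fin] at this
  omega

lemma V_of_gt {g : Gr 𝒜 P} {φ : ℕ → Fin n → ℕ} {i j : ℤ} (hi : (n : ℤ) < i) : V x φ g i j :=
  fun t z hz _ => ⟨t, le_rfl, 0, Hm.zero, by rw [hz.eq_zero_of_gt hi]; simp⟩

/-- A cocycle in `(y) • (cocycles)` is a coboundary, by the contracting homotopies. -/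
lemma cobound_of_mem (y : Fin n → S) {z : LinearMap.ker (D (P := P) y)}
    (hz : z ∈ Ideal.span (Set.range y) • (⊤ : Submodule S (LinearMap.ker (D (P := P) y)))) :
    ∃ w, D y w = (z : Finset (Fin n) → P) := by
  refine Submodule.smul_induction_on hz (fun r hr q _ => ?_) ?_
  · induction hr using Submodule.span_induction with
    | mem r h =>
      obtain ⟨s, rfl⟩ := h
      refine ⟨con S P s q, ?_⟩
      have := homotopy y s (q : Finset (Fin n) → P)
      rw [LinearMap.mem_ker.1 q.2, map_zero, zero_add] at this
      rw [this]; rfl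
    | zero => exact ⟨0, by simp⟩
    | add a b _ _ ha hb =>
      obtain ⟨u, hu⟩ := ha
      obtain ⟨v, hv⟩ := hb
      exact ⟨u + v, by rw [map_add, hu, hv, add_smul]; rfl⟩
    | smul a b _ hb =>
      obtain ⟨v, hv⟩ := hb
      exact ⟨a • v, by rw [map_smul, hv, smul_assoc]; rfl⟩
  · rintro a b ⟨u, hu⟩ ⟨v, hv⟩
    exact ⟨u + v, by rw [map_add, hu, hv]; rfl⟩

lemma KV_bdd [IsNoetherianRing S] [Module.Finite S P] (hS : IsStdGraded 𝒜) (hx : GensDegOne 𝒜 x)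
    (g : Gr 𝒜 P) :
    ∃ B : ℤ, ∀ i j, B < i + j → KV x (fun _ => 1) g i j := by
  let g' := g.pi (fun T : Finset (Fin n) => -(T.card : ℤ))
  have hD : ∀ j (z : Finset (Fin n) → P), D x (g'.pr j z) = g'.pr j (D x z) := by
    intro j z
    funext T
    change _ = g.pr (j - -(T.card : ℤ)) (D x z T)
    rw [D_apply, D_apply, map_sum]
    refine Finset.sum_congr rfl fun s hs => ?_
    rw [map_zsmul]
    change sg s T • x s • g.pr (j - -((T.erase s).card : ℤ)) (z (T.erase s)) = _
    rw [← g.smul 1 _ _ _ (hx.1 s), Finset.card_erase_of_mem hs]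
    have := Finset.card_pos.2 ⟨s, hs⟩
    congr 3
    omega
  let gk := g'.sub (LinearMap.ker (D (P := P) x)) (fun j q hq => by
    rw [LinearMap.mem_ker] at hq ⊢; rw [hD, hq, map_zero])
  obtain ⟨B, hB⟩ := gk.bdd_above hS hx
  refine ⟨B + n, fun i j hij z hz hz0 => ?_⟩
  by_cases hi : (n : ℤ) < i
  · exact ⟨0, Hm.zero, by rw [hz.eq_zero_of_gt hi, map_zero]⟩
  rw [pw_one] at hz0
  have h1 : g'.pr j z = z := by
    funext T
    have := (hz T).2
    simp only [Nat.cast_one, Finset.sum_const, nsmul_eq_mul, mul_one] at this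
    change g.pr (j - -(T.card : ℤ)) (z T) = z T
    rwa [sub_neg_eq_add]
  have h2 := hB ⟨z, hz0⟩ j (by omega)
  obtain ⟨w, hw⟩ := cobound_of_mem x h2
  exact Hm.proj (ctx hS hx).pow hz (by rw [pw_one, hw]; exact h1)

lemma exists_not_KV [Module.Finite S P] [Nontrivial P] (hS : IsStdGraded 𝒜)
    (g : Gr 𝒜 P) : ∃ i j, ¬ KV x (fun _ => 1) g i j := by
  obtain ⟨B, hB⟩ := g.bdd_below hS
  obtain ⟨j, ⟨p, hp⟩, hj⟩ := Int.exists_least_of_bdd (P := fun j => ∃ p, g.pr j p ≠ 0)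
    ⟨B, fun j ⟨p, hp⟩ => by by_contra h; exact hp (hB p j (by omega))⟩ (by
      obtain ⟨p, hp⟩ := exists_ne (0 : P)
      by_contra! h
      exact hp (g.ext_pr fun j => by rw [h, map_zero]))
  refine ⟨n, j - n, fun h => hp ?_⟩
  have e1 : ∀ s (T : Finset (Fin n)), T.erase s ≠ univ := fun s T h =>
    Finset.notMem_erase s T (by rw [h]; exact Finset.mem_univ s)
  obtain ⟨w, hw, e⟩ := h (Pi.single univ (g.pr j p)) (fun T => by
      by_cases hT : T = univ
      · subst hT
        refine ⟨fun h => absurd (by simp) h, ?_⟩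
        simp [g.pr_same]
      · simp [hT]) (by
      funext T
      rw [D_apply]
      refine Finset.sum_eq_zero fun s hs => ?_
      rw [Pi.single_eq_of_ne (e1 s T),
        smul_zero, smul_zero])
  have := congrFun e univ
  rw [Pi.single_eq_same, D_apply] at this
  rw [← this]
  refine Finset.sum_eq_zero fun s hs => ?_
  rw [← (hw _).2]
  by_contra h0
  have h1 := hj (j - n + ∑ s ∈ univ.erase s, ((1 : ℕ) : ℤ)) ⟨_, fun h => h0 (by
    rw [h, smul_zero, smul_zero])⟩
  simp only [Nat.cast_one, Finset.sum_const, nsmul_eq_mul, mul_one,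
    Finset.card_erase_of_mem (Finset.mem_univ s), Finset.card_univ, Fintype.card_fin] at h1
  have := s.2
  omega

/-- `r` is the largest total degree in which the Koszul cohomology does not vanish. -/
def IsReg (x : Fin n → S) (g : Gr 𝒜 P) (r : ℤ) : Prop :=
  (∀ i j, r < i + j → KV x (fun _ => 1) g i j) ∧ ∃ i, ¬ KV x (fun _ => 1) g i (r - i)

lemma exists_isReg_ge [IsNoetherianRing S] [Module.Finite S P] (hS : IsStdGraded 𝒜)
    (hx : GensDegOne 𝒜 x)
    (g : Gr 𝒜 P) {i j : ℤ} (h : ¬ KV x (fun _ => 1) g i j) : ∃ r, IsReg x g r ∧ i + j ≤ r := by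
  obtain ⟨B, hB⟩ := KV_bdd hS hx g
  obtain ⟨r, ⟨p, hp⟩, hr⟩ := Int.exists_greatest_of_bdd
    (P := fun r => ∃ i, ¬ KV x (fun _ => 1) g i (r - i))
    ⟨B, fun r ⟨p, hp⟩ => by by_contra h; exact hp (hB _ _ (by omega))⟩
    ⟨i + j, i, by rwa [add_sub_cancel_left]⟩
  refine ⟨r, ⟨fun a b hab => ?_, p, hp⟩, hr _ ⟨i, by rwa [add_sub_cancel_left]⟩⟩
  by_contra h'
  have := hr (a + b) ⟨a, by rwa [add_sub_cancel_left]⟩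
  omega

lemma exists_isReg [IsNoetherianRing S] [Module.Finite S P] [Nontrivial P] (hS : IsStdGraded 𝒜)
    (hx : GensDegOne 𝒜 x) (g : Gr 𝒜 P) : ∃ r, IsReg x g r := by
  obtain ⟨i, j, h⟩ := exists_not_KV (x := x) hS g
  obtain ⟨r, hr, _⟩ := exists_isReg_ge hS hx g h
  exact ⟨r, hr⟩

lemma KV_of_neg {g : Gr 𝒜 P} {m : Fin n → ℕ} {i j : ℤ} (hi : i < 0) : KV x m g i j :=
  V_const.1 (V_of_neg hi)

lemma KV_of_gt {g : Gr 𝒜 P} {m : Fin n → ℕ} {i j : ℤ} (hi : (n : ℤ) < i) : KV x m g i j :=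
  V_const.1 (V_of_gt hi)

/-- Local cohomology vanishes above the Koszul regularity. -/
lemma IsReg.LV {g : Gr 𝒜 P} {r : ℤ} (h : IsReg x g r) (hS : IsStdGraded 𝒜)
    (hx : GensDegOne 𝒜 x) {i j : ℤ} (hij : r < i + j) : V x (fun t _ => t) g i j :=
  V_of_KV (ctx hS hx) (j₀ := r + 1 - i) (fun j hj => h.1 i j (by omega)) (by omega)

/-- Local cohomology does not vanish in the total degree given by the Koszul regularity. -/
lemma IsReg.exists_not_LV {g : Gr 𝒜 P} {r : ℤ} (h : IsReg x g r) (hS : IsStdGraded 𝒜)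
    (hx : GensDegOne 𝒜 x) : ∃ i : ℕ, ¬ V x (fun t _ => t) g i (r - i) := by
  obtain ⟨i, hi, hmin⟩ := Int.exists_least_of_bdd
    (P := fun i => ¬ KV x (fun _ => 1) g i (r - i))
    ⟨0, fun i hi => by by_contra h'; exact hi (KV_of_neg (by omega))⟩ h.2
  have h0 : 0 ≤ i := by by_contra h'; exact hi (KV_of_neg (by omega))
  obtain ⟨i, rfl⟩ := Int.eq_ofNat_of_zero_le h0
  refine ⟨i, survive (ctx hS hx) (fun p j hp hj => ?_) hi⟩
  by_cases hj' : r < p + j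
  · exact h.1 p j hj'
  · obtain rfl : j = r - p := by omega
    by_contra h'
    have := hmin p h'
    omega

/-- The largest cohomological degree in which the regularity is attained. -/
lemma IsReg.exists_max {g : Gr 𝒜 P} {r : ℤ} (h : IsReg x g r) :
    ∃ i, ¬ KV x (fun _ => 1) g i (r - i) ∧ ∀ p, i < p → KV x (fun _ => 1) g p (r - p) := by
  obtain ⟨i, hi, hmax⟩ := Int.exists_greatest_of_bdd
    (P := fun i => ¬ KV x (fun _ => 1) g i (r - i))
    ⟨n, fun i hi => by by_contra h'; exact hi (KV_of_gt (by omega))⟩ h.2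
  refine ⟨i, hi, fun p hp => ?_⟩
  by_contra h'
  have := hmax p h'
  omega

end Regularity

section Conversion

variable {S : Type} [CommRing S] {𝒜 : ℤ → AddSubgroup S} {n : ℕ}
  {x : Fin n → S} {P : Type} [AddCommGroup P] [Module S P]

/-- Extension by zero of a cochain to all subsets. -/
def ext0 {i : ℕ} (z : KCochain P n i) : Finset (Fin n) → P :=
  fun T => if h : T.card = i then z ⟨T, h⟩ else 0

lemma ext0_apply {i : ℕ} (z : KCochain P n i) (T : {T : Finset (Fin n) // T.card = i}) :
    ext0 z T.1 = z T := by
  rw [ext0, dif_pos T.2]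

lemma kd_eq (t i : ℕ) (z : KCochain P n i) (Z : Finset (Fin n) → P)
    (h : ∀ T : {T : Finset (Fin n) // T.card = i}, Z T.1 = z T)
    (T : {T : Finset (Fin n) // T.card = i + 1}) :
    kd x t i z T = D (pw x fun _ => t) Z T.1 := by
  rw [D_apply, ← Finset.sum_attach]
  refine Finset.sum_congr rfl fun s _ => ?_
  rw [h ⟨T.1.erase s.1, by rw [Finset.card_erase_of_mem s.2, T.2]; rfl⟩]
  rfl

lemma ext0_restrict {i : ℕ} {Z : Finset (Fin n) → P} (h : ∀ T, T.card ≠ i → Z T = 0) :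
    ext0 (fun T : {T : Finset (Fin n) // T.card = i} => Z T.1) = Z := by
  funext T
  rw [ext0]
  split_ifs with hT
  · rfl
  · rw [h T hT]

lemma D_apply_of_card {y : Fin n → S} {i : ℕ} {Z : Finset (Fin n) → P}
    (h : ∀ T, T.card ≠ i → Z T = 0) {T : Finset (Fin n)} (hT : T.card ≠ i + 1) :
    D y Z T = 0 := by
  rw [D_apply]
  refine Finset.sum_eq_zero fun s hs => ?_
  rw [h, smul_zero, smul_zero]
  rw [Finset.card_erase_of_mem hs]
  have := Finset.card_pos.2 ⟨s, hs⟩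
  omega

lemma ext0_of_ne {i : ℕ} (z : KCochain P n i) : ∀ T, T.card ≠ i → ext0 z T = 0 :=
  fun _ hT => dif_neg hT

lemma sum_const_card (T : Finset (Fin n)) (t : ℕ) : ∑ _s ∈ T, (t : ℤ) = (t * T.card : ℕ) := by
  simp [mul_comm]

/-- The nonvanishing of local cohomology, in terms of cochains on all subsets. -/
lemma lcNZ_iff {c : Ctx 𝒜 x} {g : Gr 𝒜 P} {ℳ : ℤ → AddSubgroup P}
    (hg : ∀ j p, p ∈ ℳ j ↔ g.pr j p = p) (i : ℕ) (j : ℤ) :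
    lcNZ x ℳ i j ↔ ¬ V x (fun t _ => t) g i j := by
  have hcob : ∀ (t : ℕ) (z : KCochain P n i), kIsCobound x t i z ↔
      ∃ w, (∀ T, (T.card : ℤ) ≠ i - 1 → w T = 0) ∧ D (pw x fun _ => t) w = ext0 z := by
    intro t z
    cases i with
    | zero =>
      change z = 0 ↔ _
      constructor
      · rintro rfl
        exact ⟨0, fun _ _ => rfl, by funext T; simp [ext0]⟩
      · rintro ⟨w, hw, e⟩
        obtain rfl : w = 0 := funext fun T => hw T (by push_cast; omega)
        funext T
        rw [← ext0_apply z T, ← e, map_zero]; rfl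
    | succ i =>
      change (∃ w : KCochain P n i, kd x t i w = z) ↔ _
      constructor
      · rintro ⟨w, rfl⟩
        refine ⟨ext0 w, fun T hT => ext0_of_ne w T (fun h => hT (by rw [h]; push_cast; ring)), ?_⟩
        funext T
        by_cases hT : T.card = i + 1
        · rw [ext0_apply _ ⟨T, hT⟩, kd_eq t i w (ext0 w) (ext0_apply w)]
        · rw [ext0_of_ne _ _ hT, D_apply_of_card (ext0_of_ne w) hT]
      · rintro ⟨w, hw, e⟩
        refine ⟨fun T => w T.1, ?_⟩
        funext T
        rw [kd_eq t i _ w (fun _ => rfl), e, ext0_apply]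
  have hHm : ∀ (t : ℕ) (z : KCochain P n i), kStrand ℳ t i j z ↔
      Hm g (fun _ => t) i j (ext0 z) := by
    intro t z
    constructor
    · intro h T
      refine ⟨fun hT => ext0_of_ne z T (by exact_mod_cast hT), ?_⟩
      by_cases hT : T.card = i
      · have := (hg _ _).1 (h ⟨T, hT⟩)
        rw [sum_const_card, hT, ext0_apply z ⟨T, hT⟩, this]
      · rw [ext0_of_ne z T hT, map_zero]
    · intro h T
      have := (h T.1).2
      rw [sum_const_card, T.2, ext0_apply z T] at this
      exact (hg _ _).2 this
  have hD : ∀ (t : ℕ) (z : KCochain P n i), kd x t i z = 0 ↔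
      D (pw x fun _ => t) (ext0 z) = 0 := by
    intro t z
    constructor
    · intro h
      funext T
      by_cases hT : T.card = i + 1
      · rw [← kd_eq t i z (ext0 z) (ext0_apply z) ⟨T, hT⟩, h]; rfl
      · exact D_apply_of_card (ext0_of_ne z) hT
    · intro h
      funext T
      rw [kd_eq t i z (ext0 z) (ext0_apply z), h]; rfl
  have hpush : ∀ (t u : ℕ) (z : KCochain P n i), ext0 (kpush x u i z) =
      push P x (fun _ => t) (fun _ => t + u) (ext0 z) := by
    intro t u z
    funext T
    rw [push_apply]
    by_cases hT : T.card = i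
    · rw [ext0_apply _ ⟨T, hT⟩, ext0_apply _ ⟨T, hT⟩]
      simp [kpush]
    · rw [ext0_of_ne _ _ hT, ext0_of_ne _ _ hT, smul_zero]
  constructor
  · rintro ⟨t, z, hs, h0, hu⟩ hV
    obtain ⟨t', ht, w, hw, e⟩ := hV t (ext0 z) ((hHm t z).1 hs) ((hD t z).1 h0)
    obtain ⟨u, rfl⟩ := Nat.exists_eq_add_of_le ht
    exact hu u ((hcob _ _).2 ⟨w, fun T => (hw T).1, by rw [hpush t u]; exact e⟩)
  · intro hV
    simp only [V] at hV
    push Not at hV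
    obtain ⟨t, Z, hZ, h0, hne⟩ := hV
    have hZ' := ext0_restrict (i := i) (Z := Z) fun T hT => (hZ T).1 (by exact_mod_cast hT)
    refine ⟨t, fun T => Z T.1, (hHm _ _).2 (by rw [hZ']; exact hZ), (hD _ _).2 (by
      rw [hZ']; exact h0), fun u hu => ?_⟩
    obtain ⟨w, -, e⟩ := (hcob _ _).1 hu
    rw [hpush t u, hZ'] at e
    obtain ⟨w', hw', e'⟩ := Hm.proj (g := g) (i := i) (j := j) c.pow
      (hZ.push c (m' := fun _ => t + u) (fun _ => Nat.le_add_right _ _)) e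
    exact hne (t + u) (Nat.le_add_right _ _) w' hw' e'

end Conversion

section RegVal

variable {S : Type} [CommRing S] {𝒜 : ℤ → AddSubgroup S} {n : ℕ}
  {x : Fin n → S} {P : Type} [AddCommGroup P] [Module S P]

lemma Deg.of_le {a b : ℤ} : Deg.of a ≤ Deg.of b ↔ a ≤ b := by
  simp [Deg.of]

lemma Deg.of_add (a b : ℤ) : Deg.of a + Deg.of b = Deg.of (a + b) := rfl

/-- The regularity defined by local cohomology is the one defined by Koszul cohomology. -/
lemma IsReg.regVal_eq {g : Gr 𝒜 P} {ℳ : ℤ → AddSubgroup P}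
    (hg : ∀ j p, p ∈ ℳ j ↔ g.pr j p = p) (hS : IsStdGraded 𝒜) (hx : GensDegOne 𝒜 x) {r : ℤ}
    (h : IsReg x g r) : regVal x ℳ = Deg.of r := by
  refine le_antisymm (sSup_le ?_) ?_
  · rintro _ ⟨i, j, hij, rfl⟩
    rw [lcNZ_iff (c := ctx hS hx) hg] at hij
    rw [Deg.of_le]
    by_contra h'
    exact hij (h.LV hS hx (by omega))
  · obtain ⟨i, hi⟩ := h.exists_not_LV hS hx
    refine le_sSup ⟨i, r - i, (lcNZ_iff (c := ctx hS hx) hg _ _).2 hi, ?_⟩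
    congr 1
    ring

end RegVal

/-! ### Cycles, boundaries and homology of the resolution -/

section Complex

variable {S : Type} [CommRing S] {𝒜 : ℤ → AddSubgroup S} (F : GFC 𝒜)
variable {N : Type} [AddCommGroup N] [Module S N] (gN : Gr 𝒜 N)

lemma tmap_apply (q : ℕ) (z : Fin (F.r (q + 1)) → N) (b : Fin (F.r q)) :
    F.tmap N q z b = ∑ a, F.mat q a b • z a := rfl

lemma tmap_tmap (q : ℕ) (z : Fin (F.r (q + 2)) → N) : F.tmap N q (F.tmap N (q + 1) z) = 0 := by
  funext c
  simp only [tmap_apply, Finset.smul_sum]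
  rw [Finset.sum_comm]
  refine Finset.sum_eq_zero fun a _ => ?_
  simp only [smul_smul]
  rw [← Finset.sum_smul, F.comp_eq_zero, zero_smul]

lemma tmap_grHom (q : ℕ) :
    GrHom (gN.pi (F.deg (q + 1))) (gN.pi (F.deg q)) (F.tmap N q) := by
  intro j z
  funext b
  rw [Gr.pi_apply, tmap_apply, tmap_apply, map_sum]
  refine Finset.sum_congr rfl fun a _ => ?_
  rw [Gr.pi_apply, ← gN.smul _ _ _ _ (F.mat_mem q a b)]
  congr 2
  ring

lemma cyc_pr (q : ℕ) (j : ℤ) (z) (hz : z ∈ F.cyc N q) : (gN.pi (F.deg q)).pr j z ∈ F.cyc N q := by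
  cases q with
  | zero => trivial
  | succ q =>
    change F.tmap N q _ = 0
    rw [tmap_grHom F gN q, show F.tmap N q z = 0 from hz, map_zero]

lemma bdry_pr (q : ℕ) (j : ℤ) (z) (hz : z ∈ F.bdry N q) :
    (gN.pi (F.deg q)).pr j z ∈ F.bdry N q := by
  obtain ⟨w, rfl⟩ := hz
  exact ⟨_, tmap_grHom F gN q j w⟩

/-- The grading of the cycles. -/
noncomputable def gZ (q : ℕ) : Gr 𝒜 (F.cyc N q) := (gN.pi (F.deg q)).sub _ (cyc_pr F gN q)

/-- The grading of the boundaries. -/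
noncomputable def gB (q : ℕ) : Gr 𝒜 (F.bdry N q) := (gN.pi (F.deg q)).sub _ (bdry_pr F gN q)

/-- The grading of the homology. -/
noncomputable def gH (q : ℕ) : Gr 𝒜 (F.H N q) :=
  (gZ F gN q).quot (Submodule.comap (F.cyc N q).subtype (F.bdry N q))
    (fun j z hz => bdry_pr F gN q j z.1 hz)

/-- The class of a cycle. -/
noncomputable def cls (q : ℕ) : F.cyc N q →ₗ[S] F.H N q :=
  Submodule.mkQ (Submodule.comap (F.cyc N q).subtype (F.bdry N q))

lemma cls_surjective (q : ℕ) : Function.Surjective (cls F (N := N) q) :=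
  Submodule.mkQ_surjective _

lemma cls_eq_zero (q : ℕ) (z : F.cyc N q) : cls F q z = 0 ↔ (z : Fin (F.r q) → N) ∈ F.bdry N q :=
  Submodule.Quotient.mk_eq_zero _

lemma cls_grHom (q : ℕ) : GrHom (gZ F gN q) (gH F gN q) (cls F q) := fun _ _ => rfl

lemma bdry_le (q : ℕ) : F.bdry N q ≤ F.cyc N q := by
  rintro _ ⟨w, rfl⟩
  cases q with
  | zero => trivial
  | succ q => exact tmap_tmap F q w

lemma mem_Hpiece {𝒩 : ℤ → AddSubgroup N} (hg : ∀ j p, p ∈ 𝒩 j ↔ gN.pr j p = p) (q : ℕ) (j : ℤ)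
    (h : F.H N q) : h ∈ F.Hpiece N 𝒩 q j ↔ (gH F gN q).pr j h = h := by
  constructor
  · rintro ⟨z, hz, rfl⟩
    change (gH F gN q).pr j (cls F q z) = cls F q z
    rw [← cls_grHom F gN q]
    congr 1
    apply Subtype.ext
    funext a
    exact (hg _ _).1 (hz a trivial)
  · intro h1
    obtain ⟨z, rfl⟩ := cls_surjective F q h
    rw [← h1, ← cls_grHom F gN q]
    refine ⟨_, fun a _ => (hg _ _).2 ?_, rfl⟩
    exact gN.pr_same _ _

lemma ses_H (q : ℕ) : SES (gB F gN q) (gZ F gN q) (gH F gN q)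
    (Submodule.inclusion (bdry_le F q)) (cls F q) where
  hf _ _ := rfl
  hg := cls_grHom F gN q
  inj := Submodule.inclusion_injective _
  surj := cls_surjective F q
  exact z := by
    rw [cls_eq_zero]
    exact ⟨fun h => ⟨⟨z, h⟩, rfl⟩, by rintro ⟨b, rfl⟩; exact b.2⟩

lemma ses_B (q : ℕ) : SES (gZ F gN (q + 1)) (gN.pi (F.deg (q + 1))) (gB F gN q)
    (F.cyc N (q + 1)).subtype (F.tmap N q).rangeRestrict where
  hf _ _ := rfl
  hg j z := Subtype.ext (tmap_grHom F gN q j z)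
  inj := Submodule.injective_subtype _
  surj := LinearMap.surjective_rangeRestrict _
  exact z := by
    rw [Subtype.ext_iff]
    exact ⟨fun h => ⟨⟨z, h⟩, rfl⟩, by rintro ⟨b, rfl⟩; exact b.2⟩

lemma Z_zero {n : ℕ} {x : Fin n → S} {φ : ℕ → Fin n → ℕ} {i j : ℤ}
    (h : V x φ (gN.pi (F.deg 0)) i j) : V x φ (gZ F gN 0) i j :=
  V_equiv (Submodule.topEquiv (R := S) (M := Fin (F.r 0) → N)).symm (fun _ _ => rfl) h

instance [IsNoetherianRing S] [Module.Finite S N] (q : ℕ) : Module.Finite S (F.H N q) :=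
  Module.Finite.of_surjective (cls F q) (cls_surjective F q)

end Complex

section Lifting

variable {S : Type} [CommRing S] {𝒜 : ℤ → AddSubgroup S} {n : ℕ} {x : Fin n → S}
variable {A B C : Type} [AddCommGroup A] [Module S A] [AddCommGroup B] [Module S B]
  [AddCommGroup C] [Module S C] {gA : Gr 𝒜 A} {gB : Gr 𝒜 B} {gC : Gr 𝒜 C}

/-- If `H^i C = 0`, every class of `H^i B` comes from `A`. -/
lemma SES.from_left (c : Ctx 𝒜 x) {f : A →ₗ[S] B} {g : B →ₗ[S] C} (h : SES gA gB gC f g)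
    {m : Fin n → ℕ} {i j : ℤ} (hC : KV x m gC i j) {z : Finset (Fin n) → B} (hz : Hm gB m i j z)
    (hDz : D (pw x m) z = 0) : ∃ a w, Hm gA m i j a ∧ D (pw x m) a = 0 ∧ Hm gB m (i - 1) j w ∧
      z = (fun T => f (a T)) + D (pw x m) w := by
  obtain ⟨w1, hw1, e1⟩ := hC _ (hz.map h.hg) (by rw [D_map', hDz]; funext T; simp)
  obtain ⟨w, hw, rfl⟩ := Hm.lift h.hg h.surj hw1
  have hd : Hm gB m i j (z - D (pw x m) w) := by
    refine hz.sub ?_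
    have := hw.D c.pow
    rwa [sub_add_cancel] at this
  obtain ⟨a, ha, ea⟩ := h.lift_ker hd (fun T => by
    rw [D_map'] at e1
    have := congrFun e1 T
    rw [Pi.sub_apply, map_sub, this, sub_self])
  refine ⟨a, w, ha, eq_zero_of_map h.inj (by rw [← D_map', ea, map_sub, hDz, D_D, sub_zero]), hw,
    by rw [ea, sub_add_cancel]⟩

/-- If `H^{i+1} A = 0`, every cocycle of degree `i` of `C` lifts to a cocycle of `B`. -/
lemma SES.from_mid (c : Ctx 𝒜 x) {f : A →ₗ[S] B} {g : B →ₗ[S] C} (h : SES gA gB gC f g)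
    {m : Fin n → ℕ} {i j : ℤ} (hA : KV x m gA (i + 1) j) {z : Finset (Fin n) → C}
    (hz : Hm gC m i j z) (hDz : D (pw x m) z = 0) :
    ∃ b, Hm gB m i j b ∧ D (pw x m) b = 0 ∧ (fun T => g (b T)) = z := by
  obtain ⟨b, hb, rfl⟩ := Hm.lift h.hg h.surj hz
  rw [D_map'] at hDz
  obtain ⟨a, ha, ea⟩ := h.lift_ker (hb.D c.pow) (fun T => congrFun hDz T)
  obtain ⟨w, hw, e⟩ := hA a ha (eq_zero_of_map h.inj (by rw [← D_map', ea, D_D]))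
  rw [add_sub_cancel_right] at hw
  refine ⟨b - fun T => f (w T), hb.sub (hw.map h.hf), by rw [map_sub, D_map', e, ea, sub_self], ?_⟩
  funext T
  have : g (f (w T)) = 0 := (h.exact _).2 ⟨_, rfl⟩
  simp [this]

end Lifting

section PieceFG

variable {S : Type} [CommRing S] {𝒜 : ℤ → AddSubgroup S} {R₀ : Type} [CommRing R₀] [Algebra R₀ S]
  {P : Type} [AddCommGroup P] [Module S P] [Module R₀ P] [IsScalarTower R₀ S P]

/-- The homogeneous pieces of a Noetherian graded module are Noetherian over the degree-zero
part. -/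
lemma piece_fg [IsNoetherian S P] (hS : IsStdGraded 𝒜) (hover : GradedOver 𝒜 R₀) (g : Gr 𝒜 P)
    {j : ℤ} (V : Submodule R₀ P) (hV : ∀ v ∈ V, g.pr j v = v) : V.FG := by
  classical
  have hfg : (Submodule.span S (V : Set P)).FG := IsNoetherian.noetherian _
  obtain ⟨G, hGV, hG⟩ := Submodule.fg_span_iff_fg_span_finset_subset _ |>.1 hfg
  refine ⟨G, le_antisymm (Submodule.span_le.2 hGV) fun v hv => ?_⟩
  have hv' : v ∈ Submodule.span S (G : Set P) := hG ▸ Submodule.subset_span hv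
  obtain ⟨f, -, hf⟩ := Submodule.mem_span_finset.1 hv'
  rw [← hV v hv, ← hf, map_sum]
  refine Submodule.sum_mem _ fun a ha => ?_
  obtain ⟨K, hK⟩ := g.smul_gen (gS hS) (gS_pr_mem hS) (f a) a
  rw [hK]
  refine Submodule.sum_mem _ fun k _ => ?_
  by_cases hk : k = 0
  · subst hk
    have := gS_pr_mem hS 0 (f a)
    have h0 : (gS hS).pr 0 (f a) ∈ Set.range (algebraMap R₀ S) := hover.2 ▸ this
    obtain ⟨r, hr⟩ := h0
    rw [← hr, sub_zero, hV a (hGV ha), algebraMap_smul]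
    exact Submodule.smul_mem _ _ (Submodule.subset_span ha)
  · rw [g.pr_of_ne (hV a (hGV ha)) (by omega), smul_zero]
    exact zero_mem _

end PieceFG

/-! ### The lower bound -/

section Lower

variable {S : Type} [CommRing S] {𝒜 : ℤ → AddSubgroup S} {n : ℕ} {x : Fin n → S}
variable (F : GFC 𝒜) {N : Type} [AddCommGroup N] [Module S N] (gN : Gr 𝒜 N)

/-- The largest twist `deg i a - i` of the complex is `T`, and `j` is the last homological degree
in which it occurs. -/
structure IsTop (T : ℤ) (j : ℕ) : Prop where
  le : ∀ i a, F.deg i a - i ≤ T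
  lt : ∀ i, j < i → ∀ a, F.deg i a - i < T
  attained : ∃ b, F.deg j b - j = T

variable {F gN} {T rN : ℤ} {j : ℕ}

lemma KV_F (c : Ctx 𝒜 x) {m : Fin n → ℕ} {q : ℕ} {p e : ℤ}
    (h : ∀ a, KV x m gN p (e - F.deg q a)) : KV x m (gN.pi (F.deg q)) p e :=
  V_const.1 (V_pi c monotone_const fun a => V_const.2 (h a))

/-- If the Koszul cohomology of the homology vanishes in the critical range, every cocycle of degree `i` of the
`j`-th term comes from the next term, up to a coboundary. -/
lemma cocycle_lift (c : Ctx 𝒜 x) (hT : IsTop F T j) (hN : IsReg x gN rN) {i : ℤ}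
    (hi : ∀ p, i < p → KV x (fun _ => 1) gN p (rN - p)) {P : ℕ} (hP : ∀ i, P < i → F.r i = 0)
    (hH : ∀ (q : ℕ) (p e : ℤ), T + rN ≤ e + p - q → KV x (fun _ => 1) (gH F gN q) p e)
    {z : Finset (Fin n) → Fin (F.r j) → N}
    (hz : Hm (gN.pi (F.deg j)) (fun _ => 1) i (T + rN - i + j) z)
    (hDz : D (pw x fun _ => 1) z = 0) :
    ∃ a w, Hm (gN.pi (F.deg (j + 1))) (fun _ => 1) i (T + rN - i + j) a ∧
      D (pw x fun _ => 1) a = 0 ∧ Hm (gN.pi (F.deg j)) (fun _ => 1) (i - 1) (T + rN - i + j) w ∧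
      z = (fun U => F.tmap N j (a U)) + D (pw x fun _ => 1) w := by
  have hmono : Monotone fun (_ : ℕ) (_ : Fin n) => 1 := monotone_const
  have G1 : ∀ (q : ℕ) (p e : ℤ), T + rN < e + p - q →
      KV x (fun _ => 1) (gN.pi (F.deg q)) p e := fun q p e h => KV_F c fun a => hN.1 _ _ (by
    have := hT.le q a
    omega)
  have G2 : ∀ (q : ℕ) (p e : ℤ), j < q → i < p → T + rN - 1 ≤ e + p - q →
      KV x (fun _ => 1) (gN.pi (F.deg q)) p e := fun q p e hq hp h => KV_F c fun a => by
    have := hT.lt q hq a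
    by_cases h' : rN < p + (e - F.deg q a)
    · exact hN.1 _ _ h'
    · have e1 : e - F.deg q a = rN - p := by omega
      rw [e1]
      exact hi p hp
  have Bof : ∀ (q : ℕ), (∀ p e : ℤ, T + rN < e + p - q → V x (fun _ _ => 1) (gZ F gN q) p e) →
      ∀ p e : ℤ, T + rN < e + p - q → V x (fun _ _ => 1) (gB F gN q) p e := fun q h p e hpe =>
    V_left c hmono (ses_H F gN q) (V_const.2 (hH q _ _ (by omega))) (h p e hpe)
  have Z1 : ∀ (q : ℕ) (p e : ℤ), T + rN < e + p - q → V x (fun _ _ => 1) (gZ F gN q) p e := by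
    intro q
    induction q with
    | zero => exact fun p e h => Z_zero F gN (V_const.2 (G1 0 p e h))
    | succ q ih =>
      intro p e h
      push_cast at h
      exact V_left c hmono (ses_B F gN q) (Bof q ih _ _ (by omega))
        (V_const.2 (G1 _ _ _ (by push_cast; omega)))
  have Z2 : ∀ (k q : ℕ) (p e : ℤ), P < q + k → j < q → i < p → T + rN = e + p - q →
      V x (fun _ _ => 1) (gZ F gN q) p e := by
    intro k
    induction k with
    | zero =>
      intro q p e hq _ _ _
      have := hP q hq
      have : IsEmpty (Fin (F.r q)) := by rw [this]; infer_instance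
      exact V_of_subsingleton
    | succ k ih =>
      intro q p e hq hj hp he
      refine V_mid c hmono (ses_H F gN q) ?_ (V_const.2 (hH q _ _ he.le))
      exact V_right c hmono (ses_B F gN q) (V_const.2 (G2 _ _ _ (by omega) hp (by push_cast; omega)))
        (ih _ _ _ (by omega) (by omega) (by omega) (by push_cast; omega))
  -- The three lifts, along `F_j ⊇ Z_j ⊇ B_j ← F_{j+1}`.
  have s1 : ∃ z1 w1, Hm (gZ F gN j) (fun _ => 1) i (T + rN - i + j) z1 ∧
      D (pw x fun _ => 1) z1 = 0 ∧
      Hm (gN.pi (F.deg j)) (fun _ => 1) (i - 1) (T + rN - i + j) w1 ∧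
      z = (fun U => (z1 U : Fin (F.r j) → N)) + D (pw x fun _ => 1) w1 := by
    cases j with
    | zero =>
      let e : (Fin (F.r 0) → N) ≃ₗ[S] F.cyc N 0 :=
        (Submodule.topEquiv (R := S) (M := Fin (F.r 0) → N)).symm
      refine ⟨fun U => e.toLinearMap (z U), 0, hz.map (g' := gZ F gN 0) (fun _ _ => rfl), ?_,
        Hm.zero, ?_⟩
      · rw [D_map', hDz]; funext U; simp
      · rw [map_zero, add_zero]; rfl
    | succ j =>
      exact (ses_B F gN j).from_left c (V_const.1 (Bof j (Z1 j) _ _ (by push_cast; omega))) hz hDz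
  obtain ⟨z1, w1, h1, d1, hw1, e1⟩ := s1
  obtain ⟨z2, w2, h2, d2, hw2, e2⟩ := (ses_H F gN j).from_left c (hH j _ _ (by omega)) h1 d1
  obtain ⟨a, ha, da, ea⟩ := (ses_B F gN j).from_mid c
    (V_const.1 (Z2 P (j + 1) (i + 1) _ (by omega) (by omega) (by omega) (by push_cast; omega))) h2 d2
  refine ⟨a, (fun U => (w2 U : Fin (F.r j) → N)) + w1, ha, da,
    (hw2.map (f := (F.cyc N j).subtype) (fun _ _ => rfl)).add hw1, ?_⟩
  rw [e1, e2, ← ea, map_add, ← add_assoc]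
  congr 1
  have := D_map' (pw x fun _ => 1) (F.cyc N j).subtype w2
  simp only [Submodule.subtype_apply] at this
  rw [this]
  rfl

/-- The Koszul cohomology of the homology does not vanish in all of the critical range. The classes
of `N` of total degree `reg N`, placed at a basis vector of `F_j` of top twist, do not all come from
`F_{j+1}`, because the entries of the matrix which matter lie in the maximal ideal. -/
lemma lower [IsNoetherianRing S] [Module.Finite S N] (hS : IsStdGraded 𝒜) (hx : GensDegOne 𝒜 x)
    {R₀ : Type} [CommRing R₀] [IsLocalRing R₀] [Algebra R₀ S] (hover : GradedOver 𝒜 R₀)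
    (hmin : ∀ i a b, F.deg (i + 1) a = F.deg i b →
      F.mat i a b ∈ (algebraMap R₀ S) '' (IsLocalRing.maximalIdeal R₀ : Set R₀))
    (hT : IsTop F T j) (hN : IsReg x gN rN) {P : ℕ} (hP : ∀ i, P < i → F.r i = 0) :
    ∃ (q : ℕ) (p e : ℤ), T + rN ≤ e + p - q ∧ ¬ KV x (fun _ => 1) (gH F gN q) p e := by
  by_contra! hH
  obtain ⟨i, hi, himax⟩ := hN.exists_max
  obtain ⟨β, hβ⟩ := hT.attained
  apply hi
  have c := ctx hS hx
  let _ : Module R₀ N := Module.compHom N (algebraMap R₀ S)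
  have : IsScalarTower R₀ S N := ⟨fun r s v => by
    rw [Algebra.smul_def, mul_smul]; rfl⟩
  have halg : ∀ (r : R₀) (v : Finset (Fin n) → N), r • v = algebraMap R₀ S r • v :=
    fun r v => (algebraMap_smul S r v).symm
  have hr0 : ∀ r : R₀, algebraMap R₀ S r ∈ 𝒜 0 := fun r => by
    have : algebraMap R₀ S r ∈ (𝒜 0 : Set S) := hover.2 ▸ ⟨r, rfl⟩
    exact this
  let y := pw x fun _ => 1
  -- Cocycles and coboundaries as modules over the degree-zero part.
  let Z : Submodule R₀ (Finset (Fin n) → N) :=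
    { carrier := {z | Hm gN (fun _ => 1) i (rN - i) z ∧ D y z = 0}
      add_mem' := fun h h' => ⟨h.1.add h'.1, by rw [map_add, h.2, h'.2, add_zero]⟩
      zero_mem' := ⟨Hm.zero, map_zero _⟩
      smul_mem' := fun r z h => by
        rw [halg]
        refine ⟨?_, by rw [map_smul, h.2, smul_zero]⟩
        have := h.1.smul (hr0 r)
        rwa [zero_add] at this }
  let B : Submodule R₀ (Finset (Fin n) → N) :=
    { carrier := {z | ∃ w, Hm gN (fun _ => 1) (i - 1) (rN - i) w ∧ D y w = z}
      add_mem' := by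
        rintro _ _ ⟨u, hu, rfl⟩ ⟨v, hv, rfl⟩
        exact ⟨u + v, hu.add hv, map_add _ _ _⟩
      zero_mem' := ⟨0, Hm.zero, map_zero _⟩
      smul_mem' := by
        rintro r _ ⟨u, hu, rfl⟩
        rw [halg]
        refine ⟨algebraMap R₀ S r • u, ?_, by rw [map_smul]⟩
        have := hu.smul (hr0 r)
        rwa [zero_add] at this }
  have hfg : Z.FG := by
    refine piece_fg hS hover (gN.pi fun U : Finset (Fin n) => -(U.card : ℤ)) (j := rN - i) Z ?_
    intro z hz
    funext U
    have := (hz.1 U).2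
    simp only [Nat.cast_one, Finset.sum_const, nsmul_eq_mul, mul_one] at this
    rwa [Gr.pi_apply, sub_neg_eq_add]
  have hle : Z ≤ B ⊔ IsLocalRing.maximalIdeal R₀ • Z := by
    rintro z ⟨hz, hDz⟩
    have hsum : ∀ a, F.deg (j + 1) a ≤ F.deg j β := fun a => by
      have := hT.lt (j + 1) (by omega) a
      push_cast at this
      omega
    have hd : T + rN - i + j - F.deg j β = rN - i := by omega
    have hζ : Hm (gN.pi (F.deg j)) (fun _ => 1) i (T + rN - i + j)
        (fun U => LinearMap.single S (fun _ => N) β (z U)) := by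
      rw [Hm.pi]
      intro a
      by_cases ha : a = β
      · subst ha
        rw [hd]
        simpa using hz
      · have : (fun U => LinearMap.single S (fun _ => N) β (z U) a) = 0 := by
          funext U; simp [ha]
        rw [this]
        exact Hm.zero
    obtain ⟨α, w, hα, hDα, hw, e⟩ := cocycle_lift c hT hN himax hP hH hζ (by
      rw [D_map', hDz]; funext U; simp)
    have hDα' : ∀ a, D y (fun U => α U a) = 0 := fun a => by
      have := D_map' y (LinearMap.proj (R := S) (φ := fun _ => N) a) α
      simp only [LinearMap.proj_apply] at this
      rw [this, hDα]; rfl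
    have hw' := Hm.pi.1 hw β
    rw [hd] at hw'
    have ez : z = (∑ a, F.mat j a β • fun U => α U a) + D y (fun U => w U β) := by
      funext U
      have h1 := congrFun (congrFun e U) β
      have h2 := D_map' y (LinearMap.proj (R := S) (φ := fun _ => N) β) w
      simp only [LinearMap.proj_apply] at h2
      rw [h2]
      simp only [LinearMap.coe_single, Pi.single_eq_same, Pi.add_apply] at h1
      rw [h1, tmap_apply, Pi.add_apply, Finset.sum_apply]
      rfl
    rw [ez]
    refine add_mem (Submodule.sum_mem _ fun a _ => ?_) (Submodule.mem_sup_left ⟨_, hw', rfl⟩)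
    have hαa := Hm.pi.1 hα a
    rcases (hsum a).lt_or_eq with hlt | heq
    · obtain ⟨u, hu, eu⟩ := hN.1 i (T + rN - i + j - F.deg (j + 1) a) (by omega) _ hαa (hDα' a)
      refine Submodule.mem_sup_left ⟨F.mat j a β • u, ?_, by rw [map_smul]; exact congrArg _ eu⟩
      have := hu.smul (F.mat_mem j a β)
      convert this using 1
      omega
    · obtain ⟨r, hr, er⟩ := hmin j a β heq
      refine Submodule.mem_sup_right ?_
      rw [← er, ← halg]
      refine Submodule.smul_mem_smul hr ⟨?_, hDα' a⟩
      rwa [heq, hd] at hαa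
  have := Submodule.le_of_le_smul_of_le_jacobson_bot hfg
    (IsLocalRing.maximalIdeal_le_jacobson ⊥) hle
  exact fun z hz hDz => this ⟨hz, hDz⟩

end Lower

/-! ### Vanishing of local cohomology in dimension at most one -/

section Avoidance

variable {S : Type} [CommRing S] {𝒜 : ℤ → AddSubgroup S} {n : ℕ} {x : Fin n → S}

/-- Homogeneity of an ideal, in terms of the projections onto homogeneous components. -/
def Homog (hS : IsStdGraded 𝒜) (I : Ideal S) : Prop := ∀ j a, a ∈ I → (gS hS).pr j a ∈ I

lemma Homog.minimalPrimes {hS : IsStdGraded 𝒜} {I p : Ideal S} (hI : Homog hS I)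
    (hp : p ∈ I.minimalPrimes) : Homog hS p := by
  classical
  let _ : GradedRing 𝒜 :=
    { one_mem := hS.one_mem
      mul_mem := fun _ _ _ _ ha hb => hS.mul_mem ha hb
      toDecomposition := hS.internal.chooseDecomposition }
  have key : ∀ J : Ideal S, Homog hS J ↔ J.IsHomogeneous 𝒜 := by
    intro J
    have e : ∀ j a, ((DirectSum.decompose 𝒜 a j : 𝒜 j) : S) = (gS hS).pr j a := by
      intro j a
      rfl
    constructor
    · intro h i a ha
      rw [e]; exact h i a ha
    · intro h j a ha
      rw [← e]; exact h j ha
  rw [key] at hI ⊢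
  have h1 : I ≤ (p.homogeneousCore 𝒜).toIdeal := by
    rw [← hI.toIdeal_homogeneousCore_eq_self]
    exact Ideal.homogeneousCore_mono 𝒜 hp.1.2
  have h2 := hp.2 ⟨Ideal.IsPrime.homogeneousCore hp.1.1, h1⟩
    (Ideal.toIdeal_homogeneousCore_le 𝒜 p)
  rw [le_antisymm h2 (Ideal.toIdeal_homogeneousCore_le 𝒜 p)]
  exact (p.homogeneousCore 𝒜).isHomogeneous

lemma Homog.sup {hS : IsStdGraded 𝒜} {I J : Ideal S} (hI : Homog hS I) (hJ : Homog hS J) :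
    Homog hS (I ⊔ J) := by
  intro j a ha
  obtain ⟨b, hb, c, hc, rfl⟩ := Submodule.mem_sup.1 ha
  rw [map_add]
  exact Submodule.add_mem_sup (hI j b hb) (hJ j c hc)

lemma Homog.span {hS : IsStdGraded 𝒜} {X : Set S} (hX : ∀ a ∈ X, ∃ k, a ∈ 𝒜 k) :
    Homog hS (Ideal.span X) := by
  suffices h : ∀ a ∈ Ideal.span X, ∀ j, (gS hS).pr j a ∈ Ideal.span X from fun j a ha => h a ha j
  intro a ha
  induction ha using Submodule.span_induction with
  | mem a h =>
    intro j
    obtain ⟨k, hk⟩ := hX a h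
    rw [gS_mem hS] at hk
    rw [← hk, Gr.pr_pr]
    split_ifs
    · rw [hk]; exact Ideal.subset_span h
    · exact zero_mem _
  | zero => intro j; rw [map_zero]; exact zero_mem _
  | add a b _ _ ha hb => intro j; rw [map_add]; exact add_mem (ha j) (hb j)
  | smul a b _ hb =>
    intro j
    obtain ⟨F, hF⟩ := (gS hS).smul_gen (gS hS) (gS_pr_mem hS) a b
    rw [hF]
    exact Ideal.sum_mem _ fun k _ => Ideal.mul_mem_left _ _ (hb _)

lemma Homog.annihilator {P : Type} [AddCommGroup P] [Module S P] (hS : IsStdGraded 𝒜)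
    (g : Gr 𝒜 P) : Homog hS (Module.annihilator S P) := by
  intro k a ha
  rw [Module.mem_annihilator] at ha ⊢
  intro p
  refine g.ext_pr fun j => ?_
  obtain ⟨F, hF, hs⟩ := (gS hS).fin a
  have h1 : g.pr j ((gS hS).pr k a • p) = (gS hS).pr k a • g.pr (j - k) p := by
    rw [← g.smul _ _ _ _ (gS_pr_mem hS k a)]; congr 1; ring_nf
  rw [h1, map_zero]
  by_cases hk : k ∈ F
  · have h2 := congrArg (g.pr j) (ha (g.pr (j - k) p))
    rw [← hs, Finset.sum_smul, map_sum, map_zero, Finset.sum_eq_single k] at h2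
    · rw [g.smul_fix (gS_pr_mem hS k a) (g.pr_same (j - k) p) (by ring)] at h2
      exact h2
    · intro l _ hl
      have := g.smul_fix (gS_pr_mem hS l a) (g.pr_same (j - k) p) rfl
      exact g.pr_of_ne this (by omega)
    · exact fun h => absurd hk h
  · rw [hF k hk, zero_smul]

/-- A homogeneous ideal not contained in a given ideal `p` contains a homogeneous element outside
`p`. -/
lemma Homog.exists_notMem {hS : IsStdGraded 𝒜} {I p : Ideal S} (hI : Homog hS I) (h : ¬ I ≤ p) :
    ∃ (d : ℕ) (a : S), a ∈ 𝒜 (d : ℤ) ∧ a ∈ I ∧ a ∉ p := by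
  obtain ⟨a, ha, hap⟩ := Set.not_subset.1 h
  obtain ⟨F, hF, hs⟩ := (gS hS).fin a
  by_contra hc
  push Not at hc
  apply hap
  rw [← hs]
  refine Ideal.sum_mem _ fun j _ => ?_
  rcases le_or_gt 0 j with hj | hj
  · lift j to ℕ using hj
    exact hc j _ (gS_pr_mem hS j a) (hI j a ha)
  · have := gS_pr_mem hS j a
    rw [hS.bot_of_neg j hj, AddSubgroup.mem_bot] at this
    rw [this]; exact zero_mem _

lemma pow_mem_deg (hS : IsStdGraded 𝒜) {d : ℤ} {a : S} (ha : a ∈ 𝒜 d) (k : ℕ) :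
    a ^ k ∈ 𝒜 (k * d) := by
  induction k with
  | zero => simpa using hS.one_mem
  | succ k ih =>
    rw [pow_succ]
    have := hS.mul_mem ih ha
    convert this using 2
    push_cast; ring

lemma prod_mem_deg (hS : IsStdGraded 𝒜) {ι : Type} (E : Finset ι) (d : ι → ℕ) (a : ι → S)
    (h : ∀ e ∈ E, a e ∈ 𝒜 (d e : ℤ)) : ∏ e ∈ E, a e ∈ 𝒜 ((∑ e ∈ E, d e : ℕ) : ℤ) := by
  classical
  induction E using Finset.induction_on with
  | empty => simpa using hS.one_mem
  | insert e E he ih =>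
    rw [Finset.prod_insert he, Finset.sum_insert he]
    push_cast
    exact hS.mul_mem (h e (Finset.mem_insert_self _ _))
      (by exact_mod_cast ih fun e' h' => h e' (Finset.mem_insert_of_mem h'))

/-- Homogeneous prime avoidance: finitely many pairwise incomparable homogeneous primes, none of
them containing `S₊`, are avoided by a homogeneous element of positive degree. -/
lemma exists_avoid (hS : IsStdGraded 𝒜) (hx : GensDegOne 𝒜 x) (E : Finset (Ideal S))
    (hp : ∀ p ∈ E, p.IsPrime) (hh : ∀ p ∈ E, Homog hS p)
    (hinc : ∀ p ∈ E, ∀ q ∈ E, p ≤ q → p = q) (hmiss : ∀ p ∈ E, ∃ k, x k ∉ p) :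
    ∃ (s : ℕ) (y : S), 0 < s ∧ y ∈ 𝒜 (s : ℤ) ∧ ∀ p ∈ E, y ∉ p := by
  classical
  induction E using Finset.induction_on with
  | empty => exact ⟨1, 0, one_pos, zero_mem _, by simp⟩
  | insert p E hpE ih =>
    obtain ⟨s, y, hs, hy, hav⟩ := ih (fun q h => hp q (Finset.mem_insert_of_mem h))
      (fun q h => hh q (Finset.mem_insert_of_mem h))
      (fun q h q' h' => hinc q (Finset.mem_insert_of_mem h) q' (Finset.mem_insert_of_mem h'))
      (fun q h => hmiss q (Finset.mem_insert_of_mem h))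
    have hpp := hp p (Finset.mem_insert_self _ _)
    by_cases hyp : y ∈ p
    · obtain ⟨k, hk⟩ := hmiss p (Finset.mem_insert_self _ _)
      have hq : ∀ q : Ideal S, ∃ (d : ℕ) (a : S), q ∈ E → a ∈ 𝒜 (d : ℤ) ∧ a ∈ q ∧ a ∉ p := by
        intro q
        by_cases hqE : q ∈ E
        · obtain ⟨d, a, h⟩ := (hh q (Finset.mem_insert_of_mem hqE)).exists_notMem (p := p)
            (fun hle => hpE (by
              rwa [← hinc q (Finset.mem_insert_of_mem hqE) p (Finset.mem_insert_self _ _) hle]))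
          exact ⟨d, a, fun _ => h⟩
        · exact ⟨0, 0, fun h => absurd h hqE⟩
      choose d a ha using hq
      have hH : x k * ∏ q ∈ E, a q ∈ 𝒜 ((1 + ∑ q ∈ E, d q : ℕ) : ℤ) := by
        push_cast
        exact hS.mul_mem (hx.1 k) (by exact_mod_cast prod_mem_deg hS E d a fun q h => (ha q h).1)
      have hHp : x k * ∏ q ∈ E, a q ∉ p := by
        intro h
        rcases hpp.mem_or_mem h with h | h
        · exact hk h
        · obtain ⟨q, hq, h⟩ := (hpp.prod_mem_iff).1 h
          exact (ha q hq).2.2 h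
      set H := x k * ∏ q ∈ E, a q
      set D := 1 + ∑ q ∈ E, d q with hD
      refine ⟨D * s, y ^ D + H ^ s, by positivity, ?_, ?_⟩
      · refine add_mem ?_ ?_
        · have := pow_mem_deg hS hy D
          rwa [← Nat.cast_mul] at this
        · have := pow_mem_deg hS hH s
          rwa [← Nat.cast_mul, mul_comm] at this
      · intro q hq
        rcases Finset.mem_insert.1 hq with rfl | hqE
        · intro h
          have h1 : y ^ D ∈ q := Ideal.pow_mem_of_mem _ hyp _ (by omega)
          exact hHp (hpp.mem_of_pow_mem s ((Ideal.add_mem_iff_right _ h1).1 h))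
        · intro h
          have hHq : H ∈ q := Ideal.mul_mem_left _ _
            (Ideal.mem_of_dvd _ (Finset.dvd_prod_of_mem a hqE) (ha q hqE).2.1)
          have h1 : H ^ s ∈ q := Ideal.pow_mem_of_mem _ hHq _ hs
          exact hav q hqE ((hp q hq).mem_of_pow_mem D ((Ideal.add_mem_iff_left _ h1).1 h))
    · refine ⟨s, y, hs, hy, fun q hq => ?_⟩
      rcases Finset.mem_insert.1 hq with rfl | h
      · exact hyp
      · exact hav q h

end Avoidance

section Dimension

variable {S : Type} [CommRing S] {𝒜 : ℤ → AddSubgroup S} {n : ℕ}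
  {x : Fin n → S} {R₀ : Type} [CommRing R₀] [IsLocalRing R₀] [Algebra R₀ S]
  {P : Type} [AddCommGroup P] [Module S P]

/-- The proper homogeneous ideals strictly above a prime of coheight at most one contain `S₊`:
such a prime ideal would be maximal, and a form of degree one is not invertible modulo it. -/
lemma mem_of_coheight (hS : IsStdGraded 𝒜) (hx : GensDegOne 𝒜 x) {p q : Ideal S} [p.IsPrime]
    [q.IsPrime] (hq : Homog hS q) (hpq : p < q) (hdim : ringKrullDim (S ⧸ p) ≤ 1) (k : Fin n) :
    x k ∈ q := by
  by_contra hk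
  have hmax : q.IsMaximal := by
    have : Ring.KrullDimLE 1 (S ⧸ p) := by
      rw [Ring.krullDimLE_iff]; exact_mod_cast hdim
    have hsurj := Ideal.Quotient.mk_surjective (I := p)
    have hker : RingHom.ker (Ideal.Quotient.mk p) ≤ q := by rw [Ideal.mk_ker]; exact hpq.le
    have hprime : (q.map (Ideal.Quotient.mk p)).IsPrime := Ideal.map_isPrime_of_surjective hsurj hker
    have hne : q.map (Ideal.Quotient.mk p) ≠ ⊥ := by
      intro h
      rw [Ideal.map_eq_bot_iff_le_ker, Ideal.mk_ker] at h
      exact hpq.not_ge h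
    have hm := Ideal.IsPrime.isMaximal_of_ne_bot hprime hne
    have := Ideal.comap_isMaximal_of_surjective (Ideal.Quotient.mk p) hsurj
      (K := q.map (Ideal.Quotient.mk p))
    rwa [Ideal.comap_map_of_surjective' _ hsurj, sup_eq_left.2 hker] at this
  obtain ⟨a, b, hb, e⟩ := hmax.exists_inv hk
  have h1 : (gS hS).pr 0 (a * x k) = 0 := by
    have h := (gS hS).smul 1 (-1) (x k) a (hx.1 k)
    have h' : (gS hS).pr (-1) a = 0 := by
      have := gS_pr_mem hS (-1) a
      rwa [hS.bot_of_neg _ (by norm_num), AddSubgroup.mem_bot] at this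
    rw [h', smul_zero, smul_eq_mul, mul_comm] at h
    exact h
  have h2 := congrArg ((gS hS).pr 0) e
  rw [map_add, h1, zero_add, (gS_mem hS).1 hS.one_mem] at h2
  exact hmax.ne_top ((Ideal.eq_top_iff_one q).2 (h2 ▸ hq 0 b hb))

/-- The ideal `Ann P + 𝔪₀ S`, defining the support of `P ⊗ S₀/𝔪₀`. -/
def fibre (S R₀ P : Type) [CommRing S] [CommRing R₀] [IsLocalRing R₀] [Algebra R₀ S]
    [AddCommGroup P] [Module S P] : Ideal S :=
  Module.annihilator S P ⊔ (IsLocalRing.maximalIdeal R₀).map (algebraMap R₀ S)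

lemma fibre_homog (hS : IsStdGraded 𝒜) (hover : GradedOver 𝒜 R₀) (g : Gr 𝒜 P) :
    Homog hS (fibre S R₀ P) := by
  refine (Homog.annihilator hS g).sup (Homog.span ?_)
  rintro _ ⟨r, -, rfl⟩
  exact ⟨0, by rw [← SetLike.mem_coe, hover.2]; exact ⟨r, rfl⟩⟩

/-- If `P ⊗ S₀/𝔪₀` has dimension at most one then a form `y` of positive degree generates `S₊`
up to radical, modulo `Ann P + 𝔪₀ S`. -/
lemma exists_param [IsNoetherianRing S] [Module.Finite S P] (hS : IsStdGraded 𝒜)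
    (hover : GradedOver 𝒜 R₀) (hx : GensDegOne 𝒜 x)
    (g : Gr 𝒜 P)
    (hsupp : ∀ Q : PrimeSpectrum S, Q ∈ Module.support S P →
      (∀ r ∈ IsLocalRing.maximalIdeal R₀, algebraMap R₀ S r ∈ Q.asIdeal) →
      ringKrullDim (S ⧸ Q.asIdeal) ≤ 1) :
    ∃ (s : ℕ) (y : S) (d : ℕ), 0 < s ∧ y ∈ 𝒜 (s : ℤ) ∧
      Ideal.span (Set.range x) ^ d ≤ fibre S R₀ P ⊔ Ideal.span {y} := by
  classical
  set I := fibre S R₀ P with hI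
  have hIh : Homog hS I := fibre_homog hS hover g
  have hfin := Ideal.finite_minimalPrimes_of_isNoetherianRing S I
  obtain ⟨s, y, hs, hy, hav⟩ := exists_avoid hS hx
    (hfin.toFinset.filter fun p => ∃ k, x k ∉ p)
    (fun p hp => by simp only [Finset.mem_filter, Set.Finite.mem_toFinset] at hp; exact hp.1.1.1)
    (fun p hp => by
      simp only [Finset.mem_filter, Set.Finite.mem_toFinset] at hp; exact hIh.minimalPrimes hp.1)
    (fun p hp q hq hle => by
      simp only [Finset.mem_filter, Set.Finite.mem_toFinset] at hp hq
      exact le_antisymm hle (hq.1.2 hp.1.1 hle))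
    (fun p hp => by simp only [Finset.mem_filter] at hp; exact hp.2)
  have hIy : Homog hS (I ⊔ Ideal.span {y}) := hIh.sup (Homog.span (by
    rintro a rfl; exact ⟨s, hy⟩))
  have hrad : Ideal.span (Set.range x) ≤ (I ⊔ Ideal.span {y}).radical := by
    rw [← Ideal.sInf_minimalPrimes]
    refine le_sInf fun q hq => ?_
    have hqh := hIy.minimalPrimes hq
    have hqp : q.IsPrime := hq.1.1
    obtain ⟨p, hp, hpq⟩ := Ideal.exists_minimalPrimes_le (le_sup_left.trans hq.1.2 : I ≤ q)
    have hpp : p.IsPrime := hp.1.1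
    rw [Ideal.span_le]
    rintro _ ⟨k, rfl⟩
    by_cases hk : ∃ k, x k ∉ p
    · have hyp : y ∉ p := hav p (by
        simp only [Finset.mem_filter, Set.Finite.mem_toFinset]; exact ⟨hp, hk⟩)
      have hyq : y ∈ q := hq.1.2 (Ideal.mem_sup_right (Ideal.mem_span_singleton_self y))
      have hlt : p < q := lt_of_le_of_ne hpq (by rintro rfl; exact hyp hyq)
      refine mem_of_coheight hS hx hqh hlt (hsupp ⟨p, hpp⟩ ?_ ?_) k
      · rw [Module.mem_support_iff_of_finite]
        exact le_sup_left.trans hp.1.2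
      · exact fun r hr => hp.1.2 (Ideal.mem_sup_right (Ideal.mem_map_of_mem _ hr))
    · push Not at hk
      exact hpq (hk k)
  obtain ⟨d, hd⟩ := Ideal.exists_pow_le_of_le_radical_of_fg hrad (IsNoetherian.noetherian _)
  exact ⟨s, y, d, hs, hy, hd⟩

/-- Modulo `Ann P`, the forms of degree `d` are multiples of `y`: the ideal `𝔪₀ S` is removed by
Nakayama's lemma over `R₀`, the pieces of `S` being finitely generated `R₀`-modules. -/
lemma exists_mul [IsNoetherianRing S] (hS : IsStdGraded 𝒜) (hover : GradedOver 𝒜 R₀)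
    (hx : GensDegOne 𝒜 x)
    (g : Gr 𝒜 P) {s d : ℕ} {y : S} (hy : y ∈ 𝒜 (s : ℤ))
    (hd : Ideal.span (Set.range x) ^ d ≤ fibre S R₀ P ⊔ Ideal.span {y}) {v : S}
    (hv : v ∈ 𝒜 (d : ℤ)) : ∃ σ : S, ∀ p : P, v • p = y • σ • p := by
  have h0 : ∀ r : R₀, algebraMap R₀ S r ∈ 𝒜 0 := fun r => by
    rw [← SetLike.mem_coe, hover.2]; exact ⟨r, rfl⟩
  let A : Submodule R₀ S :=
    { carrier := 𝒜 (d : ℤ)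
      zero_mem' := zero_mem _
      add_mem' := fun ha hb => add_mem ha hb
      smul_mem' := fun r a ha => by
        rw [Algebra.smul_def]
        have := hS.mul_mem (h0 r) ha
        rwa [zero_add] at this }
  have hfg : A.FG := piece_fg hS hover (gS hS) A fun a ha => (gS_mem hS).1 ha
  let W : Submodule R₀ S := (Module.annihilator S P ⊔ Ideal.span {y}).restrictScalars R₀
  have hWh : Homog hS (Module.annihilator S P ⊔ Ideal.span {y}) :=
    (Homog.annihilator hS g).sup (Homog.span (by rintro a rfl; exact ⟨s, hy⟩))
  have hm : ∀ u ∈ (IsLocalRing.maximalIdeal R₀).map (algebraMap R₀ S), ∀ c : S,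
      (gS hS).pr d (c * u) ∈ IsLocalRing.maximalIdeal R₀ • A := by
    intro u hu
    induction hu using Submodule.span_induction with
    | mem u h =>
      obtain ⟨r, hr, rfl⟩ := h
      intro c
      have h1 := (gS hS).smul 0 d _ c (h0 r)
      rw [zero_add, smul_eq_mul, mul_comm] at h1
      rw [h1, algebraMap_smul]
      exact Submodule.smul_mem_smul hr (gS_pr_mem hS d c)
    | zero => intro c; rw [mul_zero, map_zero]; exact zero_mem _
    | add a b _ _ ha hb => intro c; rw [mul_add, map_add]; exact add_mem (ha c) (hb c)
    | smul a b _ hb => intro c; rw [smul_eq_mul, ← mul_assoc]; exact hb _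
  have hle : A ≤ W ⊔ IsLocalRing.maximalIdeal R₀ • A := by
    intro a ha
    have h1 := hd (mem_pow hS hx d ha)
    rw [fibre, sup_right_comm] at h1
    obtain ⟨b, hb, u, hu, e⟩ := Submodule.mem_sup.1 h1
    have h2 : (gS hS).pr d a = a := (gS_mem hS).1 ha
    rw [← h2, ← e, map_add]
    refine Submodule.add_mem_sup (hWh d b hb) ?_
    have := hm u hu 1
    rwa [one_mul] at this
  have hAW : A ≤ W := Submodule.le_of_le_smul_of_le_jacobson_bot hfg
    (IsLocalRing.maximalIdeal_le_jacobson ⊥) hle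
  obtain ⟨b, hb, c, hc, e⟩ := Submodule.mem_sup.1 (hAW hv : v ∈ _)
  obtain ⟨σ, rfl⟩ := Ideal.mem_span_singleton'.1 hc
  refine ⟨σ, fun p => ?_⟩
  rw [← e, add_smul, Module.mem_annihilator.1 hb, zero_add, smul_smul, mul_comm]

/-- If multiplication by `y` divides that by every `x_k ^ d` on `P`, then in cohomological degrees
`≥ 2` a class killed by a power of `y` dies in the colimit. -/
lemma dies_of_pow (c : Ctx 𝒜 x) (g : Gr 𝒜 P) {s d : ℕ} {y : S} (hy : y ∈ 𝒜 (s : ℤ))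
    (hd : ∀ k, ∃ σ : S, ∀ p : P, x k ^ d • p = y • σ • p) {i : ℤ} (hi : 2 ≤ i) (t M : ℕ) :
    ∀ (j : ℤ) (z : Finset (Fin n) → P), Hm g (fun _ => t) i j z → D (pw x fun _ => t) z = 0 →
      (∃ w, D (pw x fun _ => t) w = y ^ M • z) →
      ∃ t', t ≤ t' ∧ ∃ w, Hm g (fun _ => t') (i - 1) j w ∧
        D (pw x fun _ => t') w = push P x (fun _ => t) (fun _ => t') z := by
  choose σ hσ using hd
  have hprod : ∀ (T : Finset (Fin n)) (e : Fin n → ℕ), T.Nonempty → (∀ k, e k = d) →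
      ∃ τ : S, ∀ p : P, (∏ k ∈ T, x k ^ e k) • p = y • τ • p := by
    rintro T e ⟨k, hk⟩ he
    refine ⟨σ k * ∏ r ∈ T.erase k, x r ^ e r, fun p => ?_⟩
    rw [← Finset.mul_prod_erase _ _ hk, mul_smul, he k, hσ, mul_smul]
  induction M with
  | zero =>
    rintro j z hz - ⟨w, hw⟩
    rw [pow_zero, one_smul] at hw
    obtain ⟨w', h1, h2⟩ := hz.proj c.pow hw
    exact ⟨t, le_rfl, w', h1, by rw [h2, push_self]⟩
  | succ M ih =>
    rintro j z hz hD ⟨w0, hw0⟩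
    obtain ⟨t1, h1, w, hw, e⟩ := ih (s + j) (y • z) (hz.smul hy) (by rw [map_smul, hD, smul_zero])
      ⟨w0, by rw [hw0, pow_succ, mul_smul]⟩
    have ht1 : (fun _ : Fin n => t) ≤ fun _ => t1 := fun _ => h1
    have ht2 : (fun _ : Fin n => t1) ≤ fun _ => t1 + d := fun _ => Nat.le_add_right _ _
    have ht3 : (fun _ : Fin n => t1 + d) ≤ fun _ => t1 + d + d := fun _ => Nat.le_add_right _ _
    have hw1 : ∀ T, ∃ u, push P x (fun _ => t1) (fun _ => t1 + d) w T = y • u := by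
      intro T
      rcases T.eq_empty_or_nonempty with rfl | hT
      · refine ⟨0, ?_⟩
        rw [push_apply, (hw ∅).1 (by simp; omega), smul_zero, smul_zero]
      · obtain ⟨τ, hτ⟩ := hprod T (fun _ => t1 + d - t1) hT (fun _ => by omega)
        exact ⟨τ • w T, by rw [push_apply, hτ]⟩
    choose w1 hw1 using hw1
    have e1 : push P x (fun _ => t1) (fun _ => t1 + d) w = y • w1 := funext hw1
    set γ := push P x (fun _ => t) (fun _ => t1 + d) z - D (pw x fun _ => t1 + d) w1 with hγ
    have hyγ : y • γ = 0 := by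
      rw [hγ, smul_sub, ← map_smul (D _), ← e1, ← push_D x ht2, e, map_smul, map_smul,
        push_push x ht1 ht2, sub_self]
    have hγ0 : γ ∅ = 0 := by
      rw [hγ, Pi.sub_apply, D_apply, push_apply, (hz ∅).1 (by simp; omega)]
      simp
    have hpγ : push P x (fun _ => t1 + d) (fun _ => t1 + d + d) γ = 0 := by
      funext T
      rw [push_apply]
      rcases T.eq_empty_or_nonempty with rfl | hT
      · rw [hγ0, smul_zero]; rfl
      · obtain ⟨τ, hτ⟩ := hprod T (fun _ => t1 + d + d - (t1 + d)) hT (fun _ => by omega)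
        rw [hτ, smul_comm]
        have := congrFun hyγ T
        rw [Pi.smul_apply] at this
        rw [this, Pi.zero_apply, smul_zero]
    rw [hγ, map_sub, push_push x (ht1.trans ht2) ht3, push_D x ht3, sub_eq_zero] at hpγ
    have hle : (fun _ : Fin n => t) ≤ fun _ => t1 + d + d := (ht1.trans ht2).trans ht3
    obtain ⟨w', h2, h3⟩ := (hz.push c hle).proj c.pow hpγ.symm
    exact ⟨t1 + d + d, by omega, w', h2, h3⟩

/-- Vanishing of `H^i` for `i ≥ 2` when `P ⊗ S₀/𝔪₀` is supported in dimension at most one. -/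
theorem V_of_dim_le_one [IsNoetherianRing S] [Module.Finite S P] (hS : IsStdGraded 𝒜)
    (hover : GradedOver 𝒜 R₀) (hx : GensDegOne 𝒜 x)
    (g : Gr 𝒜 P)
    (hsupp : ∀ Q : PrimeSpectrum S, Q ∈ Module.support S P →
      (∀ r ∈ IsLocalRing.maximalIdeal R₀, algebraMap R₀ S r ∈ Q.asIdeal) →
      ringKrullDim (S ⧸ Q.asIdeal) ≤ 1) {i : ℤ} (hi : 2 ≤ i) (j : ℤ) :
    V x (fun t _ => t) g i j := by
  obtain ⟨s, y, d, hs, hy, hd⟩ := exists_param hS hover hx g hsupp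
  intro t z hz hD
  have hyr : y ∈ (Ideal.span (Set.range (pw x fun _ => t))).radical := by
    refine (Ideal.span_le.2 ?_ : Ideal.span (Set.range x) ≤ _)
      (mem_of_pos hS hx (by exact_mod_cast hs) hy)
    rintro _ ⟨k, rfl⟩
    exact ⟨t, Ideal.subset_span ⟨k, rfl⟩⟩
  obtain ⟨M, hM⟩ := hyr
  refine dies_of_pow (ctx hS hx) g (d := d) hy (fun k => ?_) hi t M j z hz hD ?_
  · exact exists_mul hS hover hx g hy hd ((ctx hS hx).pow d k)
  · exact cobound_of_mem _ (z := y ^ M • ⟨z, LinearMap.mem_ker.2 hD⟩)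
      (Submodule.smul_mem_smul hM trivial)

end Dimension

/-! ### The upper bound and the regularity of the module -/

section Upper

variable {S : Type} [CommRing S] {𝒜 : ℤ → AddSubgroup S} {n : ℕ} {x : Fin n → S}
  {F : GFC 𝒜} {N : Type} [AddCommGroup N] [Module S N] {gN : Gr 𝒜 N} {T rN : ℤ} {j : ℕ}

lemma V_F (hS : IsStdGraded 𝒜) (hx : GensDegOne 𝒜 x) (hT : IsTop F T j) (hN : IsReg x gN rN)
    {q : ℕ} {p e : ℤ} (h : T + rN < e + p - q) :
    V x (fun t _ => t) (gN.pi (F.deg q)) p e := by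
  refine V_pi (ctx hS hx) (fun _ _ h _ => h) fun a => hN.LV hS hx ?_
  have := hT.le q a
  omega

/-- The boundaries, by descending induction along the complex. -/
lemma V_bdry (hS : IsStdGraded 𝒜) (hx : GensDegOne 𝒜 x) (hT : IsTop F T j)
    (hN : IsReg x gN rN) {P : ℕ} (hP : ∀ i, P < i → F.r i = 0)
    (hdim : ∀ q : ℕ, 1 ≤ q → ∀ p e : ℤ, 2 ≤ p → V x (fun t _ => t) (gH F gN q) p e) (k : ℕ) :
    ∀ (q : ℕ) (p e : ℤ), P ≤ q + k → 1 ≤ p → T + rN + 1 < e + p - q →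
      V x (fun t _ => t) (gB F gN q) p e := by
  have c := ctx hS hx
  have hm : Monotone (fun (t : ℕ) (_ : Fin n) => t) := fun _ _ h _ => h
  induction k with
  | zero =>
    intro q p e hq _ _
    have h0 : IsEmpty (Fin (F.r (q + 1))) := by
      rw [hP (q + 1) (by omega)]; infer_instance
    have : Subsingleton (F.bdry N q) := (F.tmap N q).surjective_rangeRestrict.subsingleton
    exact V_of_subsingleton
  | succ k ih =>
    intro q p e hq hp h
    refine V_right c hm (ses_B F gN q) (V_F hS hx hT hN (by push_cast; omega)) ?_
    exact V_mid c hm (ses_H F gN (q + 1))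
      (ih (q + 1) (p + 1) e (by omega) (by omega) (by push_cast; omega))
      (hdim (q + 1) (by omega) _ _ (by omega))

/-- The cycles in cohomological degrees at most one, by ascending induction along the complex. -/
lemma V_cyc (hS : IsStdGraded 𝒜) (hx : GensDegOne 𝒜 x) (hT : IsTop F T j)
    (hN : IsReg x gN rN) (q : ℕ) : ∀ p e : ℤ, p ≤ 1 → T + rN < e + p - q →
      V x (fun t _ => t) (gZ F gN q) p e := by
  have c := ctx hS hx
  have hm : Monotone (fun (t : ℕ) (_ : Fin n) => t) := fun _ _ h _ => h
  induction q with
  | zero => exact fun p e _ h => Z_zero F gN (V_F hS hx hT hN h)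
  | succ q ih =>
    intro p e hp h
    refine V_left c hm (ses_B F gN q) ?_ (V_F hS hx hT hN h)
    exact V_left c hm (ses_H F gN q) (V_of_neg (by omega))
      (ih (p - 1) e (by omega) (by push_cast at h; omega))

/-- Local cohomology of the homology of `F ⊗ N` vanishes in total degree above
`T + reg N + q`. -/
lemma V_H (hS : IsStdGraded 𝒜) (hx : GensDegOne 𝒜 x) (hT : IsTop F T j)
    (hN : IsReg x gN rN) {P : ℕ} (hP : ∀ i, P < i → F.r i = 0)
    (hdim : ∀ q : ℕ, 1 ≤ q → ∀ p e : ℤ, 2 ≤ p → V x (fun t _ => t) (gH F gN q) p e)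
    {q : ℕ} {p e : ℤ} (h : T + rN < e + p - q) : V x (fun t _ => t) (gH F gN q) p e := by
  have hm : Monotone (fun (t : ℕ) (_ : Fin n) => t) := fun _ _ h _ => h
  by_cases hqp : 1 ≤ q ∧ 2 ≤ p
  · exact hdim q hqp.1 p e hqp.2
  by_cases hp : p < 0
  · exact V_of_neg hp
  refine V_right (ctx hS hx) hm (ses_H F gN q) ?_
    (V_bdry hS hx hT hN hP hdim P q (p + 1) e (by omega) (by omega) (by omega))
  by_cases hq : 1 ≤ q
  · exact V_cyc hS hx hT hN q p e (by omega) h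
  · obtain rfl : q = 0 := by omega
    exact Z_zero F gN (V_F hS hx hT hN h)

end Upper

section Tor

variable {S : Type} [CommRing S] {𝒜 : ℤ → AddSubgroup S} {n : ℕ} {x : Fin n → S}

lemma exists_isTop (F : GFC 𝒜) {P : ℕ} (hP : ∀ i, P < i → F.r i = 0) (h0 : 0 < F.r 0) :
    ∃ T j, IsTop F T j := by
  classical
  let E : Finset (Σ i, Fin (F.r i)) := (Finset.range (P + 1)).sigma fun _ => Finset.univ
  have hE : ∀ i a, (⟨i, a⟩ : Σ i, Fin (F.r i)) ∈ E := by
    intro i a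
    refine Finset.mem_sigma.2 ⟨Finset.mem_range.2 ?_, Finset.mem_univ _⟩
    by_contra h
    have h1 : F.r i = 0 := hP i (by simp only at h; omega)
    have h2 := a.2
    omega
  obtain ⟨u, hu, hmax⟩ := E.exists_max_image (fun u => F.deg u.1 u.2 - u.1) ⟨⟨0, 0, h0⟩, hE _ _⟩
  obtain ⟨v, hv, hvmax⟩ := (E.filter fun v : (Σ i, Fin (F.r i)) =>
    F.deg v.1 v.2 - v.1 = F.deg u.1 u.2 - u.1).exists_max_image
    (fun v : (Σ i, Fin (F.r i)) => v.1) ⟨u, Finset.mem_filter.2 ⟨hu, rfl⟩⟩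
  refine ⟨F.deg u.1 u.2 - u.1, v.1, fun i a => hmax _ (hE i a), fun i hi a => ?_,
    v.2, (Finset.mem_filter.1 hv).2⟩
  refine lt_of_le_of_ne (hmax _ (hE i a)) fun h => ?_
  have := hvmax ⟨i, a⟩ (Finset.mem_filter.2 ⟨hE i a, h⟩)
  simp only at this
  omega

lemma Gr.pr_smul_of_fix {P : Type} [AddCommGroup P] [Module S P] (hS : IsStdGraded 𝒜)
    (g : Gr 𝒜 P) {d : ℤ} {p : P} (hp : g.pr d p = p) (j : ℤ) (s : S) :
    g.pr j (s • p) = (gS hS).pr (j - d) s • p := by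
  have h1 : ∀ l, g.pr (l + d) ((gS hS).pr l s • p) = (gS hS).pr l s • p := fun l =>
    g.smul_fix (gS_pr_mem hS l s) hp rfl
  obtain ⟨K, hK, hs⟩ := (gS hS).fin s
  conv_lhs => rw [← hs, Finset.sum_smul, map_sum]
  by_cases h : j - d ∈ K
  · rw [Finset.sum_eq_single_of_mem _ h fun l _ hl => g.pr_of_ne (h1 l) (by omega)]
    have := h1 (j - d)
    rwa [sub_add_cancel] at this
  · rw [hK _ h, zero_smul]
    exact Finset.sum_eq_zero fun l hl => g.pr_of_ne (h1 l) (by rintro rfl; simp [hl] at h)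

variable {M : Type} [AddCommGroup M] [Module S M] {ℳ : ℤ → AddSubgroup M} {m0 : Set S}

lemma subsingleton_H (F : MGFR 𝒜 ℳ m0) (q : ℕ) (hq : 1 ≤ q) : Subsingleton (F.toGFC.H S q) := by
  obtain ⟨q, rfl⟩ : ∃ k, q = k + 1 := ⟨q - 1, by omega⟩
  refine subsingleton_of_forall_eq 0 fun h => ?_
  obtain ⟨z, rfl⟩ := cls_surjective F.toGFC (q + 1) h
  rw [cls_eq_zero]
  exact (F.exact_succ q z).1 z.2

/-- The augmentation, on the degree-zero cycles of `F ⊗ S`. -/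
noncomputable def augm (F : MGFR 𝒜 ℳ m0) : F.toGFC.cyc S 0 →ₗ[S] M :=
  (Fintype.linearCombination S F.augm).comp (F.toGFC.cyc S 0).subtype

lemma augm_apply (F : MGFR 𝒜 ℳ m0) (z : F.toGFC.cyc S 0) :
    augm F z = ∑ a, (z : Fin (F.r 0) → S) a • F.augm a := rfl

lemma augm_ker (F : MGFR 𝒜 ℳ m0) : Submodule.comap (F.toGFC.cyc S 0).subtype (F.toGFC.bdry S 0)
    = LinearMap.ker (augm F) := by
  ext z
  rw [LinearMap.mem_ker, augm_apply, F.exact_zero]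
  rfl

lemma augm_surjective (F : MGFR 𝒜 ℳ m0) : Function.Surjective (augm F) := fun m => by
  obtain ⟨z, hz⟩ := F.augm_surj m
  exact ⟨⟨z, trivial⟩, hz⟩

/-- The identification of `H_0(F ⊗ S)` with `M`. -/
noncomputable def equivH (F : MGFR 𝒜 ℳ m0) : F.toGFC.H S 0 ≃ₗ[S] M :=
  (Submodule.quotEquivOfEq _ _ (augm_ker F)).trans
    ((augm F).quotKerEquivOfSurjective (augm_surjective F))

lemma equivH_cls (F : MGFR 𝒜 ℳ m0) (z : F.toGFC.cyc S 0) :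
    equivH F (cls F.toGFC 0 z) = augm F z := rfl

lemma equivH_grHom (hS : IsStdGraded 𝒜) (F : MGFR 𝒜 ℳ m0) {g : Gr 𝒜 M}
    (hg : ∀ j p, p ∈ ℳ j ↔ g.pr j p = p) :
    GrHom (gH F.toGFC (gS hS) 0) g (equivH F).toLinearMap := by
  intro j h
  obtain ⟨z, rfl⟩ := cls_surjective F.toGFC 0 h
  rw [← cls_grHom]
  change equivH F _ = g.pr j (equivH F _)
  rw [equivH_cls, equivH_cls, augm_apply, augm_apply, map_sum]
  refine Finset.sum_congr rfl fun a _ => ?_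
  rw [g.pr_smul_of_fix hS ((hg _ _).1 (F.augm_mem a))]
  rfl

lemma GrHom.symm {A B : Type} [AddCommGroup A] [Module S A] [AddCommGroup B] [Module S B]
    {gA : Gr 𝒜 A} {gB : Gr 𝒜 B} {e : A ≃ₗ[S] B} (he : GrHom gA gB e.toLinearMap) :
    GrHom gB gA e.symm.toLinearMap := fun k p => by
  apply e.injective
  have := he k (e.symm p)
  simp only [LinearEquiv.coe_coe, LinearEquiv.apply_symm_apply] at this ⊢
  exact this.symm

variable [IsNoetherianRing S]

/-- The total degree `T + reg N` is attained by local cohomology of the homology of `F ⊗ N`. -/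
lemma exists_not_V_H (hS : IsStdGraded 𝒜) (hx : GensDegOne 𝒜 x) {R₀ : Type} [CommRing R₀]
    [IsLocalRing R₀] [Algebra R₀ S] (hover : GradedOver 𝒜 R₀)
    (F : MGFR 𝒜 ℳ ((algebraMap R₀ S) '' (IsLocalRing.maximalIdeal R₀ : Set R₀)))
    {P : ℕ} (hP : ∀ i, P < i → F.r i = 0) {N : Type} [AddCommGroup N] [Module S N]
    [Module.Finite S N] {gN : Gr 𝒜 N} {T rN : ℤ} {j : ℕ} (hT : IsTop F.toGFC T j)
    (hN : IsReg x gN rN) :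
    ∃ (q p : ℕ) (e : ℤ), T + rN ≤ e + p - q ∧ ¬ V x (fun t _ => t) (gH F.toGFC gN q) p e := by
  obtain ⟨q, p, e, h, hne⟩ := lower hS hx hover F.minimal hT hN hP
  obtain ⟨r, hr, hle⟩ := exists_isReg_ge hS hx _ hne
  obtain ⟨i, hi⟩ := hr.exists_not_LV hS hx
  exact ⟨q, i, r - i, by omega, hi⟩

/-- The invariant `T` of the minimal resolution is `reg M - reg S`: this is the case `N = S`, in
which the homology of `F ⊗ N` is `M`. -/
lemma reg_eq (hS : IsStdGraded 𝒜) (hx : GensDegOne 𝒜 x) {R₀ : Type} [CommRing R₀]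
    [IsLocalRing R₀] [Algebra R₀ S] (hover : GradedOver 𝒜 R₀)
    (F : MGFR 𝒜 ℳ ((algebraMap R₀ S) '' (IsLocalRing.maximalIdeal R₀ : Set R₀)))
    {P : ℕ} (hP : ∀ i, P < i → F.r i = 0) {g : Gr 𝒜 M}
    (hg : ∀ j p, p ∈ ℳ j ↔ g.pr j p = p) {T rS rM : ℤ} {j : ℕ} (hT : IsTop F.toGFC T j)
    (hSr : IsReg x (gS hS) rS) (hM : IsReg x g rM) : rM = T + rS := by
  have he := equivH_grHom hS F hg
  have hsub := subsingleton_H F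
  apply le_antisymm
  · obtain ⟨i, hi⟩ := hM.exists_not_LV hS hx
    by_contra h
    refine hi (V_equiv (equivH F) he (V_H hS hx hT hSr hP (fun q hq p e _ => ?_)
      (by push_cast; omega)))
    have := hsub q hq
    exact V_of_subsingleton
  · obtain ⟨q, p, e, h, hne⟩ := exists_not_V_H hS hx hover F hP hT hSr
    rcases Nat.eq_zero_or_pos q with rfl | hq
    · by_contra h'
      exact hne (V_equiv (equivH F).symm he.symm (hM.LV hS hx (by push_cast at h; omega)))
    · have := hsub q hq
      exact absurd V_of_subsingleton hne

end Tor

end RegTor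

/-- **Regularity of Tor modules** (Corollary 5.5; Theorem 1 of the introduction).  Let `S` be
a standard graded ring over a Noetherian local ring `(S₀, m₀)` and `M`, `N` finitely
generated nonzero graded `S`-modules such that `M` has finite projective dimension (recorded
by a finite minimal graded free resolution `F_•` of `M`, so that
`Tor_i^S(M, N) = H_i(F_• ⊗_S N)`) and such that `Tor_i^S(M, N) ⊗_{S₀} S₀/m₀` is supported in
dimension at most one for all `i ≥ 1`.  Then
`max_i (reg(Tor_i^S(M, N)) − i) = reg(M) + reg(N) − reg(S)`, stated in the equivalent form
`max_i (reg(Tor_i^S(M, N)) − i) + reg(S) = reg(M) + reg(N)`. -/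
theorem reg_tor_eq (S : Type) [CommRing S] [IsNoetherianRing S]
    (𝒜 : ℤ → AddSubgroup S) (hSG : IsStdGraded 𝒜)
    (R₀ : Type) [CommRing R₀] [IsNoetherianRing R₀] [IsLocalRing R₀] [Algebra R₀ S]
    (hover : GradedOver 𝒜 R₀)
    {n : ℕ} (x : Fin n → S) (hx : GensDegOne 𝒜 x)
    (M : Type) [AddCommGroup M] [Module S M] [Module.Finite S M] [Nontrivial M]
    (ℳ : ℤ → AddSubgroup M) (hgm : IsGradedMod 𝒜 ℳ)
    (N : Type) [AddCommGroup N] [Module S N] [Module.Finite S N] [Nontrivial N]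
    (𝒩 : ℤ → AddSubgroup N) (hgn : IsGradedMod 𝒜 𝒩)
    (F : MGFR 𝒜 ℳ ((algebraMap R₀ S) '' (IsLocalRing.maximalIdeal R₀ : Set R₀)))
    (hfinpd : ∃ P : ℕ, ∀ i, P < i → F.r i = 0)
    (hsupp : ∀ i : ℕ, 1 ≤ i → ∀ P : PrimeSpectrum S,
      P ∈ Module.support S (F.toGFC.H N i) →
      (∀ r ∈ IsLocalRing.maximalIdeal R₀, algebraMap R₀ S r ∈ P.asIdeal) →
      ringKrullDim (S ⧸ P.asIdeal) ≤ 1) :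
    sSup {d : Deg | ∃ (i p : ℕ) (j : ℤ),
        lcNZ x (F.toGFC.Hpiece N 𝒩 i) p j ∧ d = Deg.of (j + p - i)} + regVal x 𝒜 =
      regVal x ℳ + regVal x 𝒩 := by
  obtain ⟨P, hP⟩ := hfinpd
  have hgM := RegTor.Gr.ofGraded_mem hgm
  have hgN := RegTor.Gr.ofGraded_mem hgn
  have : Nontrivial S := Module.nontrivial S M
  have h0 : 0 < F.r 0 := by
    rw [Nat.pos_iff_ne_zero]
    intro h
    obtain ⟨m, hm⟩ := exists_ne (0 : M)
    obtain ⟨z, rfl⟩ := F.augm_surj m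
    have : IsEmpty (Fin (F.r 0)) := by rw [h]; infer_instance
    exact hm (Finset.univ_eq_empty (α := Fin (F.r 0)) ▸ Finset.sum_empty)
  obtain ⟨T, j, hT⟩ := RegTor.exists_isTop F.toGFC hP h0
  obtain ⟨rM, hM⟩ := RegTor.exists_isReg hSG hx (RegTor.Gr.ofGraded hgm)
  obtain ⟨rN, hN⟩ := RegTor.exists_isReg hSG hx (RegTor.Gr.ofGraded hgn)
  obtain ⟨rS, hSr⟩ := RegTor.exists_isReg hSG hx (RegTor.gS hSG)
  have hlc := fun (q p : ℕ) (e : ℤ) => RegTor.lcNZ_iff (c := RegTor.ctx hSG hx)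
    (fun k h => RegTor.mem_Hpiece F.toGFC (RegTor.Gr.ofGraded hgn) hgN q k h) p e
  have hsup : sSup {d : Deg | ∃ (i p : ℕ) (j : ℤ),
      lcNZ x (F.toGFC.Hpiece N 𝒩 i) p j ∧ d = Deg.of (j + p - i)} = Deg.of (T + rN) := by
    refine le_antisymm (sSup_le ?_) ?_
    · rintro _ ⟨q, p, e, h, rfl⟩
      rw [hlc] at h
      rw [RegTor.Deg.of_le]
      by_contra hlt
      exact h (RegTor.V_H hSG hx hT hN hP (fun i hi p e hp =>
        RegTor.V_of_dim_le_one hSG hover hx _ (hsupp i hi) hp e) (by omega))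
    · obtain ⟨q, p, e, h, hne⟩ := RegTor.exists_not_V_H hSG hx hover F hP hT hN
      exact (RegTor.Deg.of_le.2 h).trans (le_sSup ⟨q, p, e, (hlc q p e).2 hne, rfl⟩)
  rw [hsup, hM.regVal_eq hgM hSG hx, hN.regVal_eq hgN hSG hx,
    hSr.regVal_eq (fun k s => RegTor.gS_mem hSG) hSG hx,
    RegTor.reg_eq hSG hx hover F hP hgM hT hSr hM, RegTor.Deg.of_add, RegTor.Deg.of_add]
  congr 1
  ring
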